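/- Let (j_{0,k})_{k ≥ 1} denote the strictly increasing enumeration of the positive zeros of J_0, let (ω_k)_{k ≥ 1} be the strictly increasing enumeration of the set {j_{0,n}^2 − j_{0,p}^2 : p ∈ {1, 2, 3}, n ≥ p + 1}, and set ω_0 := 0. Then for every T > 0 there exists a continuous ℝ-linear map M : ℝ × ℓ²_r(ℕ, ℂ) → L^2((0,T); ℝ) such that for every d̃ ∈ ℝ and every d = (d_n)_{n ∈ ℕ} ∈ ℓ²_r(ℕ, ℂ), the function w := M(d̃, d) satisfies ∫_0^T w(t) e^{i ω_n t} dt = d_n for every n ∈ ℕ and ∫_0^T t w(t) dt = d̃. -/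

import Mathlib

open MeasureTheory Complex

/-- Bessel function of the first kind of integer order `ν`, defined by its
everywhere-convergent power series. -/
noncomputable def besselJ (ν : ℕ) (x : ℝ) : ℝ :=
  ∑' m : ℕ, ((-1 : ℝ) ^ m / ((Nat.factorial m : ℝ) * (Nat.factorial (m + ν) : ℝ)))
    * (x / 2) ^ (2 * m + ν)

/-- `ℓ²_r(ℕ, ℂ)`: the real subspace of `ℓ²(ℕ, ℂ)` consisting of those sequences whose
zeroth entry is real. -/
noncomputable def l2r : Submodule ℝ (lp (fun _ : ℕ => ℂ) 2) where
  carrier := {d | (d 0).im = 0}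
  add_mem' := by
    intro a b ha hb
    simp only [Set.mem_setOf_eq, lp.coeFn_add, Pi.add_apply, Complex.add_im] at *
    rw [ha, hb]; ring
  zero_mem' := by
    simp only [Set.mem_setOf_eq, lp.coeFn_zero, Pi.zero_apply, Complex.zero_im]
  smul_mem' := by
    intro c d hd
    simp only [Set.mem_setOf_eq, lp.coeFn_smul, Pi.smul_apply, Complex.smul_im] at *
    rw [hd]; simp

/-!
In the variable `z = (x/2)²` Bessel's equation for `J₀` becomes a first order system, and Rolle's
theorem with two mean value estimates shows that the gaps `j_{0,n+1}² - j_{0,n}²` tend to infinity.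
Hence, outside a finite set, the frequencies `±ω_n` are translates of one finite pattern by points
as far apart as desired. On any interval `(0, T)` the exponentials of such a cluster are linearly
independent, uniformly in the translation, and distinct clusters are almost orthogonal for the
weight `t (T - t)`, whose Fourier transform decays quadratically. This gives an Ingham inequality
and, by Riesz–Fischer duality, solves the moment problem off a finite set of frequencies in
arbitrarily short time. Subtracting from `w` a modulated translate of itself annihilates one chosen
moment at the cost of a slightly longer interval; this yields a biorthogonal function for each of
the remaining frequencies and for the weight `t`. Real parts of complex solutions with suitable data
at `±ω_n` are real solutions, and the solution orthogonal to the common kernel of the moment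
functionals depends linearly and, by the closed graph theorem, continuously on the data.
-/

/-! ### Zeros of the Bessel function `J₀` -/

section Bessel

open Filter

section PowerSeries

variable {c : ℕ → ℝ}

lemma summable_mul_pow_of_abs_le_inv_factorial (hc : ∀ m, |c m| ≤ 1 / (m.factorial : ℝ)) (z : ℝ) :
    Summable fun m => c m * z ^ m := by
  refine (Real.summable_pow_div_factorial |z|).of_norm_bounded fun m => ?_
  rw [norm_mul, norm_pow, Real.norm_eq_abs, Real.norm_eq_abs, div_eq_inv_mul, ← one_div]
  gcongr
  exact hc m

lemma abs_mul_derivative_pow_le (hc : ∀ m, |c m| ≤ 1 / (m.factorial : ℝ)) {R y : ℝ}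
    (hR : 1 ≤ R) (hy : |y| ≤ R) (m : ℕ) :
    |c m * (m * y ^ (m - 1))| ≤ (2 * R) ^ m / (m.factorial : ℝ) := by
  have hpow : |y| ^ (m - 1) ≤ R ^ m :=
    (pow_le_pow_left₀ (abs_nonneg _) hy _).trans (pow_le_pow_right₀ hR (Nat.sub_le _ _))
  have htwo : (m : ℝ) ≤ 2 ^ m := by exact_mod_cast (Nat.lt_two_pow_self (n := m)).le
  calc |c m * (m * y ^ (m - 1))| = |c m| * (m * |y| ^ (m - 1)) := by
        rw [abs_mul, abs_mul, abs_pow, Nat.abs_cast]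
    _ ≤ 1 / (m.factorial : ℝ) * (2 ^ m * R ^ m) := by gcongr; exact hc m
    _ = (2 * R) ^ m / (m.factorial : ℝ) := by rw [mul_pow]; ring

lemma hasDerivAt_tsum_mul_pow (hc : ∀ m, |c m| ≤ 1 / (m.factorial : ℝ)) (z : ℝ) :
    HasDerivAt (fun z : ℝ => ∑' m, c m * z ^ m)
      (∑' m : ℕ, ((m : ℝ) + 1) * c (m + 1) * z ^ m) z := by
  set R : ℝ := |z| + 1
  have hR : 1 ≤ R := le_add_of_nonneg_left (abs_nonneg z)
  have hz : z ∈ Metric.ball (0 : ℝ) R := by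
    rw [mem_ball_zero_iff, Real.norm_eq_abs]
    exact lt_add_one _
  have hbound (m : ℕ) (y : ℝ) (hy : y ∈ Metric.ball (0 : ℝ) R) :
      ‖c m * (m * y ^ (m - 1))‖ ≤ (2 * R) ^ m / (m.factorial : ℝ) :=
    abs_mul_derivative_pow_le hc hR (mem_ball_zero_iff.1 hy).le m
  have hmajorant := Real.summable_pow_div_factorial (2 * R)
  have hderiv := hasDerivAt_tsum_of_isPreconnected (g := fun m z => c m * z ^ m)
    (g' := fun m z => c m * (m * z ^ (m - 1))) hmajorant
    Metric.isOpen_ball (convex_ball (0 : ℝ) R).isPreconnected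
    (fun m y _ => (hasDerivAt_pow m y).const_mul (c m)) hbound hz
    (summable_mul_pow_of_abs_le_inv_factorial hc z) hz
  rw [(hmajorant.of_norm_bounded fun m => hbound m z hz).tsum_eq_zero_add] at hderiv
  refine hderiv.congr_deriv ?_
  simp only [Nat.cast_zero, zero_mul, mul_zero, zero_add, add_tsub_cancel_right]
  exact tsum_congr fun m => by push_cast; ring

end PowerSeries

/-- The `m`-th Taylor coefficient of `besselClifford n`. -/
noncomputable def besselCliffordCoeff (n m : ℕ) : ℝ :=
  (-1) ^ m / ((m.factorial : ℝ) * ((m + n).factorial : ℝ))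

/-- The entire function `Cₙ` with `Jₙ(x) = (x/2)ⁿ Cₙ((x/2)²)`. In the variable `z = (x/2)²`
Bessel's equation becomes the first order system `C₀' = -C₁`, `(z C₁)' = C₀`. -/
noncomputable def besselClifford (n : ℕ) (z : ℝ) : ℝ :=
  ∑' m, besselCliffordCoeff n m * z ^ m

lemma abs_besselCliffordCoeff_le (n m : ℕ) :
    |besselCliffordCoeff n m| ≤ 1 / (m.factorial : ℝ) := by
  rw [besselCliffordCoeff, abs_div, abs_neg_one_pow, abs_mul, Nat.abs_cast, Nat.abs_cast]
  gcongr
  exact le_mul_of_one_le_right (by positivity) (by exact_mod_cast (m + n).factorial_pos)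

lemma hasDerivAt_besselClifford (n : ℕ) (z : ℝ) :
    HasDerivAt (besselClifford n) (-besselClifford (n + 1) z) z := by
  refine (hasDerivAt_tsum_mul_pow (abs_besselCliffordCoeff_le n) z).congr_deriv ?_
  rw [besselClifford, ← tsum_neg]
  refine tsum_congr fun m => ?_
  rw [besselCliffordCoeff, besselCliffordCoeff, Nat.factorial_succ,
    show m + 1 + n = m + (n + 1) by ring]
  push_cast
  field_simp
  ring

lemma mul_besselClifford_add_two (n : ℕ) (z : ℝ) :
    z * besselClifford (n + 2) z = (n + 1) * besselClifford (n + 1) z - besselClifford n z := by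
  have hsum (k : ℕ) : Summable fun m => besselCliffordCoeff k m * z ^ m :=
    summable_mul_pow_of_abs_le_inv_factorial (abs_besselCliffordCoeff_le k) z
  simp only [besselClifford, ← tsum_mul_left]
  rw [← ((hsum (n + 1)).mul_left _).tsum_sub (hsum n),
    (((hsum (n + 1)).mul_left ((n : ℝ) + 1)).sub (hsum n)).tsum_eq_zero_add]
  have hzero : ((n : ℝ) + 1) * (besselCliffordCoeff (n + 1) 0 * z ^ 0)
      - besselCliffordCoeff n 0 * z ^ 0 = 0 := by
    simp only [besselCliffordCoeff, zero_add, Nat.factorial_succ n]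
    push_cast
    field_simp
    ring
  rw [hzero, zero_add]
  refine tsum_congr fun m => ?_
  simp only [besselCliffordCoeff, show m + 1 + (n + 1) = m + n + 1 + 1 by ring,
    show m + (n + 2) = m + n + 1 + 1 by ring, show m + 1 + n = m + n + 1 by ring,
    Nat.factorial_succ m, Nat.factorial_succ (m + n + 1)]
  push_cast
  field_simp
  ring

lemma hasDerivAt_mul_besselClifford_one (z : ℝ) :
    HasDerivAt (fun z => z * besselClifford 1 z) (besselClifford 0 z) z := by
  refine ((hasDerivAt_id z).mul (hasDerivAt_besselClifford 1 z)).congr_deriv ?_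
  have hrec := mul_besselClifford_add_two 0 z
  simp only [id_eq, Nat.cast_zero, zero_add, one_mul, Nat.reduceAdd] at hrec ⊢
  linarith

lemma besselJ_eq_besselClifford (n : ℕ) (x : ℝ) :
    besselJ n x = (x / 2) ^ n * besselClifford n ((x / 2) ^ 2) := by
  rw [besselJ, besselClifford, ← tsum_mul_left]
  exact tsum_congr fun m => by
    rw [besselCliffordCoeff, pow_add, pow_mul]
    ring

section ZeroGap

variable {F A : ℝ → ℝ} {a b M : ℝ}

lemma abs_le_of_hasDerivAt_mul_of_eq_zero (hA : ∀ z, HasDerivAt (fun z => z * A z) (F z) z)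
    (ha : 0 < a) (hM : ∀ x ∈ Set.Icc a b, |F x| ≤ M) {c x : ℝ} (hc : c ∈ Set.Icc a b)
    (hAc : A c = 0) (hx : x ∈ Set.Icc a b) : |A x| ≤ M * (b - a) / a := by
  have hMnonneg : 0 ≤ M := (abs_nonneg _).trans (hM x hx)
  have hmean := (convex_Icc a b).norm_image_sub_le_of_norm_hasDerivWithin_le
    (fun y _ => (hA y).hasDerivWithinAt) hM hc hx
  rw [hAc, mul_zero, sub_zero, Real.norm_eq_abs, Real.norm_eq_abs, abs_mul] at hmean
  rw [le_div_iff₀ ha]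
  calc |A x| * a ≤ |x| * |A x| := by
        rw [mul_comm]
        gcongr
        exact hx.1.trans (le_abs_self x)
    _ ≤ M * |x - c| := hmean
    _ ≤ M * (b - a) := by gcongr; exact Real.dist_le_of_mem_Icc hx hc

/-- Rolle's theorem gives a zero of `A` in `(a, b)`, so two applications of the mean value
inequality bound `max |F|` over `[a, b]` by `(b - a)² / a` times itself. -/
lemma le_sq_sub_of_zeros (hF : ∀ z, HasDerivAt F (-A z) z)
    (hA : ∀ z, HasDerivAt (fun z => z * A z) (F z) z) (ha : 0 < a) (hab : a < b)
    (hFa : F a = 0) (hFb : F b = 0) (hne : ∃ m ∈ Set.Icc a b, F m ≠ 0) : a ≤ (b - a) ^ 2 := by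
  obtain ⟨m, hm, hFm⟩ := hne
  have hcont : Continuous F := continuous_iff_continuousAt.2 fun z => (hF z).continuousAt
  obtain ⟨c, hc, hAc⟩ := exists_hasDerivAt_eq_zero hab hcont.continuousOn (by rw [hFa, hFb])
    fun x _ => hF x
  obtain ⟨p, hp, hmax⟩ :=
    isCompact_Icc.exists_isMaxOn (Set.nonempty_Icc.2 hab.le) hcont.abs.continuousOn
  have hpos : 0 < |F p| := (abs_pos.2 hFm).trans_le (hmax hm)
  have hAbound (x : ℝ) (hx : x ∈ Set.Icc a b) : ‖-A x‖ ≤ |F p| * (b - a) / a := by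
    rw [norm_neg]
    exact abs_le_of_hasDerivAt_mul_of_eq_zero hA ha (fun x hx => hmax hx)
      (Set.Ioo_subset_Icc_self hc) (neg_eq_zero.1 hAc) hx
  have hmean := (convex_Icc a b).norm_image_sub_le_of_norm_hasDerivWithin_le
    (fun y _ => (hF y).hasDerivWithinAt) hAbound (Set.left_mem_Icc.2 hab.le) hp
  rw [hFa, sub_zero, Real.norm_eq_abs, Real.norm_eq_abs] at hmean
  refine le_of_mul_le_mul_left ?_ hpos
  calc |F p| * a ≤ |F p| * (b - a) / a * |p - a| * a := by gcongr
    _ = |F p| * ((b - a) * |p - a|) := by field_simp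
    _ ≤ |F p| * ((b - a) * (b - a)) := by
        have := sub_pos.2 hab
        gcongr
        exact Real.dist_le_of_mem_Icc hp (Set.left_mem_Icc.2 hab.le)
    _ = |F p| * (b - a) ^ 2 := by rw [sq]

end ZeroGap

lemma two_mul_le_sq_sub_sq_of_besselJ_zero_eq_zero {a b : ℝ} (ha : 0 < a) (hab : a < b)
    (hJa : besselJ 0 a = 0) (hJb : besselJ 0 b = 0)
    (hne : ∃ x ∈ Set.Icc a b, besselJ 0 x ≠ 0) : 2 * a ≤ b ^ 2 - a ^ 2 := by
  simp only [besselJ_eq_besselClifford, pow_zero, one_mul] at hJa hJb hne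
  obtain ⟨x, ⟨hax, hxb⟩, hx⟩ := hne
  have hgap := le_sq_sub_of_zeros (hasDerivAt_besselClifford 0) hasDerivAt_mul_besselClifford_one
    (by positivity) (by gcongr) hJa hJb
    ⟨(x / 2) ^ 2, ⟨by gcongr, by have := ha.trans_le hax; gcongr⟩, hx⟩
  have hle : (a / 2) ^ 2 ≤ (b / 2) ^ 2 := by gcongr
  have := abs_le_of_sq_le_sq hgap (sub_nonneg.2 hle)
  rw [abs_of_pos (half_pos ha)] at this
  linarith

lemma two_mul_le_sq_sub_sq_besselJ_zeros {z : ℕ → ℝ} (hz : StrictMono z)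
    (hrange : Set.range z = {x | 0 < x ∧ besselJ 0 x = 0}) (k : ℕ) :
    2 * z k ≤ z (k + 1) ^ 2 - z k ^ 2 := by
  have hmem (l : ℕ) : 0 < z l ∧ besselJ 0 (z l) = 0 := hrange.subset (Set.mem_range_self l)
  have hlt : z k < z (k + 1) := hz k.lt_succ_self
  refine two_mul_le_sq_sub_sq_of_besselJ_zero_eq_zero (hmem k).1 hlt (hmem k).2 (hmem (k + 1)).2
    ⟨(z k + z (k + 1)) / 2, ⟨by linarith, by linarith⟩, fun hzero => ?_⟩
  obtain ⟨l, hl⟩ := hrange.superset ⟨by linarith [(hmem k).1], hzero⟩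
  have hkl : k < l := hz.lt_iff_lt.1 (by linarith)
  have hlk : l < k + 1 := hz.lt_iff_lt.1 (by linarith)
  omega

lemma tendsto_atTop_of_eventually_le_sub {u : ℕ → ℝ} {δ : ℝ} (hδ : 0 < δ)
    (h : ∀ᶠ k in atTop, δ ≤ u (k + 1) - u k) : Tendsto u atTop atTop := by
  obtain ⟨N, hN⟩ := eventually_atTop.1 h
  have hlin (k : ℕ) : u N + k * δ ≤ u (k + N) := by
    induction k with
    | zero => simp
    | succ k ih =>
      have := hN (k + N) (Nat.le_add_left _ _)
      rw [show k + 1 + N = k + N + 1 by ring]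
      push_cast
      linarith
  rw [← tendsto_add_atTop_iff_nat N]
  exact tendsto_atTop_mono hlin (tendsto_atTop_add_const_left _ _
    (tendsto_natCast_atTop_atTop.atTop_mul_const hδ))

lemma tendsto_sq_sub_sq_besselJ_zeros {z : ℕ → ℝ} (hz : StrictMono z)
    (hrange : Set.range z = {x | 0 < x ∧ besselJ 0 x = 0}) :
    Tendsto (fun k => z (k + 1) ^ 2 - z k ^ 2) atTop atTop := by
  have hgap := two_mul_le_sq_sub_sq_besselJ_zeros hz hrange
  have hpos (k : ℕ) : 0 < z k := (hrange.subset (Set.mem_range_self k)).1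
  have hsq : Tendsto (fun k => z k ^ 2) atTop atTop :=
    tendsto_atTop_of_eventually_le_sub (mul_pos two_pos (hpos 0)) <| .of_forall fun k =>
      (mul_le_mul_of_nonneg_left (hz.monotone k.zero_le) zero_le_two).trans (hgap k)
  have hroot : Tendsto z atTop atTop := by
    refine (Real.tendsto_sqrt_atTop.comp hsq).congr fun k => ?_
    exact Real.sqrt_sq (hpos k).le
  exact tendsto_atTop_mono hgap (hroot.const_mul_atTop two_pos)

end Bessel

/-! ### Sparse clusters of frequencies -/

section SparseClusters

open Filter
open scoped Pointwise

/-- Up to finitely many points, `X` is contained in the translates of a fixed finite pattern `O`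
by points that are as far apart, and as far from the origin, as desired. -/
def HasSparseClusters (X : Set ℝ) : Prop :=
  ∃ O : Finset ℝ, ∀ G : ℝ, ∃ B : Set ℝ, (B.Pairwise fun x y => G ≤ |x - y|) ∧
    (∀ x ∈ B, G ≤ |x|) ∧ (X \ (B + ↑O)).Finite

variable {X Y : Set ℝ}

lemma HasSparseClusters.mono (hY : HasSparseClusters Y) (hXY : X ⊆ Y) : HasSparseClusters X := by
  obtain ⟨O, hO⟩ := hY
  refine ⟨O, fun G => ?_⟩
  obtain ⟨B, hsep, hlarge, hfin⟩ := hO G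
  exact ⟨B, hsep, hlarge, hfin.subset (Set.sdiff_subset_sdiff_left hXY)⟩

lemma HasSparseClusters.insert (hX : HasSparseClusters X) (x : ℝ) :
    HasSparseClusters (insert x X) := by
  obtain ⟨O, hO⟩ := hX
  refine ⟨O, fun G => ?_⟩
  obtain ⟨B, hsep, hlarge, hfin⟩ := hO G
  exact ⟨B, hsep, hlarge, (hfin.insert x).subset Set.insert_sdiff_subset⟩

lemma pairwise_le_abs_sub_union_neg {B : Set ℝ} {G : ℝ} (hsep : B.Pairwise fun x y => G ≤ |x - y|)
    (hpos : ∀ x ∈ B, 0 < x ∧ G ≤ x) : (B ∪ -B).Pairwise fun x y => G ≤ |x - y| := by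
  have hopposite {x y : ℝ} (hx : x ∈ B) (hy : -y ∈ B) : G ≤ |x - y| :=
    ((hpos x hx).2.trans (by linarith [(hpos _ hy).1])).trans (le_abs_self _)
  rintro x (hx | hx) y (hy | hy) hxy
  · exact hsep hx hy hxy
  · exact hopposite hx hy
  · rw [abs_sub_comm]
    exact hopposite hy hx
  · simpa only [neg_sub_neg, abs_sub_comm] using hsep hx hy (neg_injective.ne hxy)

lemma HasSparseClusters.exists_pos (hX : HasSparseClusters X) (hnonneg : ∀ x ∈ X, 0 ≤ x) :
    ∃ O : Finset ℝ, ∀ G : ℝ, ∃ B : Set ℝ, (B.Pairwise fun x y => G ≤ |x - y|) ∧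
      (∀ x ∈ B, 0 < x ∧ G ≤ x) ∧ (X \ (B + ↑O)).Finite := by
  obtain ⟨O, hO⟩ := hX
  obtain ⟨R, hR⟩ : ∃ R, ∀ o ∈ O, |o| ≤ R := by
    obtain ⟨R, hR⟩ := (O.image abs).bddAbove
    exact ⟨R, fun o ho => hR (Finset.mem_image_of_mem _ ho)⟩
  refine ⟨O, fun G => ?_⟩
  obtain ⟨B, hsep, hlarge, hfin⟩ := hO (max G (R + 1))
  refine ⟨{x ∈ B | 0 < x}, fun x hx y hy hxy => (le_max_left _ _).trans (hsep hx.1 hy.1 hxy),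
    fun x hx => ⟨hx.2, ?_⟩, hfin.subset fun x hx => ⟨hx.1, fun hxB => hx.2 ?_⟩⟩
  · exact (le_max_left _ _).trans ((hlarge x hx.1).trans_eq (abs_of_pos hx.2))
  · obtain ⟨b, hb, o, ho, rfl⟩ := hxB
    refine Set.add_mem_add ⟨hb, ?_⟩ ho
    have hoR := abs_le.1 (hR o ho)
    have hRb : R + 1 ≤ |b| := (le_max_right _ _).trans (hlarge b hb)
    rcases le_abs.1 hRb with h | h <;> linarith [hnonneg _ hx.1]

lemma HasSparseClusters.union_neg (hX : HasSparseClusters X) (hnonneg : ∀ x ∈ X, 0 ≤ x) :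
    HasSparseClusters (X ∪ -X) := by
  classical
  obtain ⟨O, hO⟩ := hX.exists_pos hnonneg
  refine ⟨O ∪ -O, fun G => ?_⟩
  obtain ⟨B, hsep, hpos, hfin⟩ := hO G
  refine ⟨B ∪ -B, pairwise_le_abs_sub_union_neg hsep hpos, ?_,
    (hfin.union hfin.neg).subset ?_⟩
  · rintro x (hx | hx)
    · exact (hpos x hx).2.trans (le_abs_self x)
    · exact (hpos _ hx).2.trans (neg_le_abs x)
  · rw [Finset.coe_union, Finset.coe_neg]
    rintro x ⟨hx | hx, hnot⟩
    · exact .inl ⟨hx, fun h => hnot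
        (Set.add_subset_add Set.subset_union_left Set.subset_union_left h)⟩
    · refine .inr ⟨hx, fun h => hnot
        (Set.add_subset_add Set.subset_union_right Set.subset_union_right ?_)⟩
      rwa [← neg_add, Set.mem_neg]

lemma hasSparseClusters_range_sub {u : ℕ → ℝ}
    (hu : Tendsto (fun k => u (k + 1) - u k) atTop atTop) (P : Finset ℝ) :
    HasSparseClusters (Set.range u - ↑P) := by
  refine ⟨-P, fun G => ?_⟩
  have htop := tendsto_atTop_of_eventually_le_sub one_pos (hu.eventually_ge_atTop 1)
  obtain ⟨N, hN⟩ := eventually_atTop.1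
    ((hu.eventually_ge_atTop (max G 0)).and (htop.eventually_ge_atTop G))
  have hmono : MonotoneOn u (Set.Ici N) := monotoneOn_of_le_add_one Set.ordConnected_Ici
    fun k _ hk _ => sub_nonneg.1 ((le_max_right _ _).trans (hN k hk).1)
  have hgap {k l : ℕ} (hk : N ≤ k) (hkl : k < l) : G ≤ u l - u k :=
    ((le_max_left _ _).trans (hN k hk).1).trans <| sub_le_sub_right
      (hmono (hk.trans k.le_succ) (hk.trans hkl.le) (Nat.succ_le_of_lt hkl)) _
  refine ⟨u '' Set.Ici N, ?_, ?_, (((Set.finite_Iio N).image u).sub P.finite_toSet).subset ?_⟩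
  · rintro _ ⟨k, hk, rfl⟩ _ ⟨l, hl, rfl⟩ hne
    rcases lt_or_gt_of_ne (ne_of_apply_ne u hne) with h | h
    · rw [abs_sub_comm]
      exact (hgap hk h).trans (le_abs_self _)
    · exact (hgap hl h).trans (le_abs_self _)
  · rintro _ ⟨k, hk, rfl⟩
    exact (hN k hk).2.trans (le_abs_self _)
  · rintro _ ⟨⟨_, ⟨k, rfl⟩, p, hp, rfl⟩, hnot⟩
    refine Set.sub_mem_sub (Set.mem_image_of_mem u (Set.mem_Iio.2 (not_le.1 fun hk => hnot ?_))) hp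
    rw [Finset.coe_neg, ← sub_eq_add_neg]
    exact Set.sub_mem_sub (Set.mem_image_of_mem u hk) hp

end SparseClusters

/-! ### Exponential modes -/

section ExpMode

open Filter

/-- The character `t ↦ e^{iθt}` of frequency `θ`. -/
noncomputable def expMode (θ t : ℝ) : ℂ := Complex.exp (I * θ * t)

lemma expMode_eq_exp_ofReal_mul_I (θ t : ℝ) : expMode θ t = Complex.exp ((θ * t : ℝ) * I) := by
  rw [expMode]
  congr 1
  push_cast
  ring

lemma norm_expMode (θ t : ℝ) : ‖expMode θ t‖ = 1 := by
  rw [expMode_eq_exp_ofReal_mul_I, Complex.norm_exp_ofReal_mul_I]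

lemma expMode_zero_left (t : ℝ) : expMode 0 t = 1 := by simp [expMode]

lemma expMode_add_left (θ θ' t : ℝ) : expMode (θ + θ') t = expMode θ t * expMode θ' t := by
  simp only [expMode, ← Complex.exp_add]
  congr 1
  push_cast
  ring

lemma expMode_add_right (θ s t : ℝ) : expMode θ (s + t) = expMode θ s * expMode θ t := by
  simp only [expMode, ← Complex.exp_add]
  congr 1
  push_cast
  ring

lemma conj_expMode (θ t : ℝ) : (starRingEnd ℂ) (expMode θ t) = expMode (-θ) t := by
  simp [expMode, ← Complex.exp_conj]

@[fun_prop]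
lemma continuous_expMode (θ : ℝ) : Continuous (expMode θ) := by
  unfold expMode
  fun_prop

lemma hasDerivAt_expMode (θ t : ℝ) : HasDerivAt (expMode θ) (I * θ * expMode θ t) t := by
  have h : HasDerivAt (fun z : ℂ => Complex.exp (I * θ * z)) (I * θ * expMode θ t) (t : ℂ) := by
    simpa [expMode, mul_comm] using ((hasDerivAt_id (t : ℂ)).const_mul (I * (θ : ℂ))).cexp
  exact h.comp_ofReal

lemma analyticOnNhd_expMode (θ : ℝ) : AnalyticOnNhd ℝ (expMode θ) Set.univ := by
  intro t _
  unfold expMode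
  have hofReal : AnalyticAt ℝ (fun t : ℝ => (t : ℂ)) t := ofRealCLM.analyticAt t
  exact (analyticAt_cexp.restrictScalars (𝕜 := ℝ)).comp (analyticAt_const.mul hofReal)

lemma expMode_injective : Function.Injective expMode := by
  intro θ θ' h
  have hderiv := (hasDerivAt_expMode θ 0).unique (h ▸ hasDerivAt_expMode θ' 0)
  simpa [expMode] using hderiv

/-- Dedekind's independence of characters. -/
lemma linearIndependent_expMode : LinearIndependent ℂ expMode := by
  let character (θ : ℝ) : Multiplicative ℝ →* ℂ :=
    { toFun := fun t => expMode θ t.toAdd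
      map_one' := by simp [expMode]
      map_mul' := fun s t => expMode_add_right θ s.toAdd t.toAdd }
  have hinj : Function.Injective character := fun θ θ' h =>
    expMode_injective (funext fun t => DFunLike.congr_fun h (Multiplicative.ofAdd t))
  exact (linearIndependent_monoidHom (Multiplicative ℝ) ℂ).comp character hinj

section Lp

variable (μ : Measure ℝ) [IsFiniteMeasure μ]

lemma memLp_expMode (θ : ℝ) : MemLp (expMode θ) 2 μ :=
  .of_bound (continuous_expMode θ).aestronglyMeasurable 1
    (.of_forall fun t => (norm_expMode θ t).le)

/-- The character of frequency `θ` as a vector of `L²(μ)`. -/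
noncomputable def expLp (θ : ℝ) : Lp ℂ 2 μ := (memLp_expMode μ θ).toLp (expMode θ)

lemma coeFn_expLp (θ : ℝ) : expLp μ θ =ᵐ[μ] expMode θ := (memLp_expMode μ θ).coeFn_toLp

lemma inner_expLp_right (f : Lp ℂ 2 μ) (θ : ℝ) :
    inner ℂ f (expLp μ θ) = ∫ t, (starRingEnd ℂ) (f t) * expMode θ t ∂μ := by
  rw [L2.inner_def]
  refine integral_congr_ae ?_
  filter_upwards [coeFn_expLp μ θ] with t ht
  rw [ht, RCLike.inner_apply, mul_comm]

lemma inner_expLp_expLp (θ θ' : ℝ) :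
    inner ℂ (expLp μ θ) (expLp μ θ') = ∫ t, expMode (θ' - θ) t ∂μ := by
  rw [inner_expLp_right]
  refine integral_congr_ae ?_
  filter_upwards [coeFn_expLp μ θ] with t ht
  rw [ht, conj_expMode, ← expMode_add_left, neg_add_eq_sub]

variable {ι : Type*}

lemma coeFn_sum_smul_expLp (s : Finset ι) (a : ι → ℂ) (θ : ι → ℝ) :
    (∑ i ∈ s, a i • expLp μ (θ i) : Lp ℂ 2 μ) =ᵐ[μ] fun t => ∑ i ∈ s, a i * expMode (θ i) t := by
  have hterm : ∀ i ∈ s, (a i • expLp μ (θ i) : Lp ℂ 2 μ) =ᵐ[μ] fun t => a i * expMode (θ i) t := by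
    intro i _
    filter_upwards [Lp.coeFn_smul (a i) (expLp μ (θ i)), coeFn_expLp μ (θ i)] with t hsmul hexp
    rw [hsmul, Pi.smul_apply, hexp, smul_eq_mul]
  filter_upwards [Lp.coeFn_finsetSum s fun i => a i • expLp μ (θ i),
    (eventually_all_finset s).2 hterm] with t hsum ht
  rw [hsum, Finset.sum_apply]
  exact Finset.sum_congr rfl ht

lemma norm_sq_sum_smul_expLp (s : Finset ι) (a : ι → ℂ) (θ : ι → ℝ) :
    ‖∑ i ∈ s, a i • expLp μ (θ i)‖ ^ 2 = ∫ t, ‖∑ i ∈ s, a i * expMode (θ i) t‖ ^ 2 ∂μ := by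
  rw [← Complex.ofReal_inj, ← integral_complex_ofReal, Complex.ofReal_pow]
  refine (inner_self_eq_norm_sq_to_K (𝕜 := ℂ) (∑ i ∈ s, a i • expLp μ (θ i))).symm.trans ?_
  rw [L2.inner_def]
  refine integral_congr_ae ?_
  filter_upwards [coeFn_sum_smul_expLp μ s a θ] with t ht
  rw [ht, inner_self_eq_norm_sq_to_K]
  norm_cast

lemma norm_sum_smul_expLp_add (s : Finset ι) (a : ι → ℂ) (θ : ι → ℝ) (η : ℝ) :
    ‖∑ i ∈ s, a i • expLp μ (η + θ i)‖ = ‖∑ i ∈ s, a i • expLp μ (θ i)‖ := by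
  rw [← sq_eq_sq₀ (norm_nonneg _) (norm_nonneg _), norm_sq_sum_smul_expLp μ s a fun i => η + θ i,
    norm_sq_sum_smul_expLp]
  refine integral_congr_ae (.of_forall fun t => ?_)
  simp only [expMode_add_left, mul_left_comm _ (expMode η t), ← Finset.mul_sum, norm_mul,
    norm_expMode, one_mul]

variable {μ}

lemma linearIndependent_expLp {a b : ℝ} (hab : a < b)
    (hμ : volume.restrict (Set.Ioo a b) ≪ μ) : LinearIndependent ℂ (expLp μ) := by
  refine linearIndependent_iff'.2 fun s g hzero => linearIndependent_iff'.1
    linearIndependent_expMode s g ?_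
  set f : ℝ → ℂ := ∑ θ ∈ s, g θ • expMode θ with hf
  have hanalytic : AnalyticOnNhd ℝ f Set.univ := Finset.analyticOnNhd_sum s fun θ _ =>
    (analyticOnNhd_const (v := g θ)).smul (analyticOnNhd_expMode θ)
  have hae : f =ᵐ[μ] 0 := by
    filter_upwards [coeFn_sum_smul_expLp μ s g id, Lp.coeFn_zero ℂ 2 μ] with t ht ht0
    simp only [id_eq, hzero, ht0] at ht
    simpa [hf] using ht.symm
  have hIoo : Set.EqOn f 0 (Set.Ioo a b) := Measure.eqOn_open_of_ae_eq (hμ.ae_le hae) isOpen_Ioo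
    (hanalytic.continuousOn.mono (Set.subset_univ _)) continuousOn_const
  obtain ⟨m, hm⟩ := Set.nonempty_Ioo.2 hab
  exact hanalytic.eq_of_eventuallyEq analyticOnNhd_const
    (eventually_of_mem (Ioo_mem_nhds hm.1 hm.2) hIoo)

end Lp

end ExpMode

lemma exists_pos_mul_sum_norm_sq_le_of_linearIndependent {𝕜 E ι : Type*} [RCLike 𝕜]
    [NormedAddCommGroup E] [NormedSpace 𝕜 E] {v : ι → E} (hv : LinearIndependent 𝕜 v)
    (s : Finset ι) :
    ∃ c : ℝ, 0 < c ∧ ∀ a : ι → 𝕜, c * ∑ i ∈ s, ‖a i‖ ^ 2 ≤ ‖∑ i ∈ s, a i • v i‖ ^ 2 := by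
  let L : EuclideanSpace 𝕜 s →ₗ[𝕜] E := Fintype.linearCombination 𝕜 (fun i : s => v i) ∘ₗ
    (WithLp.linearEquiv 2 𝕜 (s → 𝕜)).toLinearMap
  have hker : L.ker = ⊥ := LinearMap.ker_eq_bot.2 <|
    (hv.comp _ Subtype.val_injective).fintypeLinearCombination_injective.comp
      (WithLp.linearEquiv 2 𝕜 (s → 𝕜)).injective
  obtain ⟨K, hK, hL⟩ := L.exists_antilipschitzWith hker
  refine ⟨((K : ℝ) ^ 2)⁻¹, by positivity, fun a => ?_⟩
  have hLa : L (WithLp.toLp 2 fun i : s => a i) = ∑ i ∈ s, a i • v i := by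
    rw [← Finset.sum_coe_sort]
    exact Fintype.linearCombination_apply _ _ _
  have hbound := ZeroHomClass.bound_of_antilipschitz L hL (WithLp.toLp 2 fun i : s => a i)
  rw [hLa] at hbound
  have hsq := pow_le_pow_left₀ (norm_nonneg _) hbound 2
  rw [EuclideanSpace.norm_sq_eq, mul_pow,
    Finset.sum_coe_sort s (fun i => ‖a i‖ ^ 2)] at hsq
  rwa [inv_mul_le_iff₀ (by positivity)]

/-! ### Ingham's inequality for sparse clusters -/

section ParabolicMeasure

variable {T : ℝ}

/-- The measure `t (T - t) dt` on `(0, T)`. Its density vanishes at both end points, so that its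
Fourier transform decays quadratically, which is summable over a separated set of frequencies. -/
noncomputable def parabolicMeasure (T : ℝ) : Measure ℝ :=
  (volume.restrict (Set.Ioo 0 T)).withDensity fun t => ENNReal.ofReal (t * (T - t))

instance isFiniteMeasure_parabolicMeasure : IsFiniteMeasure (parabolicMeasure T) := by
  have hcont : Continuous fun t : ℝ => t * (T - t) := by fun_prop
  exact isFiniteMeasure_withDensity_ofReal
    ((hcont.integrableOn_Icc (μ := volume)).mono_set Set.Ioo_subset_Icc_self).2

lemma mul_sub_pos_of_mem_Ioo {t : ℝ} (ht : t ∈ Set.Ioo 0 T) : 0 < t * (T - t) :=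
  mul_pos ht.1 (sub_pos.2 ht.2)

lemma restrict_absolutelyContinuous_parabolicMeasure :
    volume.restrict (Set.Ioo 0 T) ≪ parabolicMeasure T := by
  refine withDensity_absolutelyContinuous' (by fun_prop) ?_
  filter_upwards [ae_restrict_mem measurableSet_Ioo] with t ht
  exact (ENNReal.ofReal_pos.2 (mul_sub_pos_of_mem_Ioo ht)).ne'

lemma integral_parabolicMeasure {E : Type*} [NormedAddCommGroup E] [NormedSpace ℝ E]
    (f : ℝ → E) : ∫ t, f t ∂parabolicMeasure T = ∫ t in Set.Ioo 0 T, (t * (T - t)) • f t := by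
  rw [parabolicMeasure, integral_withDensity_eq_integral_toReal_smul (by fun_prop)
    (.of_forall fun _ => ENNReal.ofReal_lt_top)]
  refine setIntegral_congr_fun measurableSet_Ioo fun t ht => ?_
  simp only [ENNReal.toReal_ofReal (mul_sub_pos_of_mem_Ioo ht).le]

lemma integral_parabolicMeasure_le {f : ℝ → ℝ} (hf : Continuous f) (hnonneg : ∀ t, 0 ≤ f t) :
    ∫ t, f t ∂parabolicMeasure T ≤ T ^ 2 * ∫ t in Set.Ioo 0 T, f t := by
  rw [integral_parabolicMeasure, ← integral_const_mul]
  have hint {g : ℝ → ℝ} (hg : Continuous g) : IntegrableOn g (Set.Ioo 0 T) :=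
    (hg.integrableOn_Icc).mono_set Set.Ioo_subset_Icc_self
  refine setIntegral_mono_on (hint (by fun_prop)) (hint (by fun_prop)) measurableSet_Ioo
    fun t ht => mul_le_mul_of_nonneg_right ?_ (hnonneg t)
  nlinarith [ht.1, ht.2]

lemma hasDerivAt_parabola_mul_expMode_antideriv {x : ℝ} (hx : x ≠ 0) (t : ℝ) :
    HasDerivAt (fun t : ℝ => expMode x t *
        ((t * (T - t)) / (I * x) - (T - 2 * t) / (I * x) ^ 2 - 2 / (I * x) ^ 3))
      ((t * (T - t)) * expMode x t) t := by
  have hxI : I * (x : ℂ) ≠ 0 := mul_ne_zero I_ne_zero (by exact_mod_cast hx)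
  have hid : HasDerivAt (fun t : ℝ => (t : ℂ)) 1 t := (hasDerivAt_id t).ofReal_comp
  have hfactor := (((hid.mul (hid.const_sub (T : ℂ))).div_const (I * x)).sub
    (((hid.const_mul 2).const_sub (T : ℂ)).div_const ((I * x) ^ 2))).sub_const (2 / (I * x) ^ 3)
  refine ((hasDerivAt_expMode x t).mul hfactor).congr_deriv ?_
  simp only [Pi.mul_apply, Pi.sub_apply]
  generalize I * (x : ℂ) = z at hxI ⊢
  field_simp
  ring

lemma integral_expMode_parabolicMeasure (hT : 0 ≤ T) {x : ℝ} (hx : x ≠ 0) :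
    ∫ t, expMode x t ∂parabolicMeasure T = expMode x T * (T / (I * x) ^ 2 - 2 / (I * x) ^ 3)
      + (T / (I * x) ^ 2 + 2 / (I * x) ^ 3) := by
  rw [integral_parabolicMeasure, ← integral_Ioc_eq_integral_Ioo,
    ← intervalIntegral.integral_of_le hT]
  simp only [Complex.real_smul]
  push_cast
  rw [intervalIntegral.integral_eq_sub_of_hasDerivAt
    (fun t _ => hasDerivAt_parabola_mul_expMode_antideriv hx t)
    (Continuous.intervalIntegrable (by fun_prop) _ _)]
  simp only [expMode, sub_self, mul_zero, zero_div, zero_sub, ofReal_zero, exp_zero, sub_zero,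
    zero_mul, one_mul]
  ring

lemma norm_integral_expMode_parabolicMeasure_le (hT : 0 ≤ T) {x : ℝ} (hx : 1 ≤ |x|) :
    ‖∫ t, expMode x t ∂parabolicMeasure T‖ ≤ (2 * T + 4) / x ^ 2 := by
  have hx0 : x ≠ 0 := abs_pos.1 (one_pos.trans_le hx)
  have hnorm : ‖I * (x : ℂ)‖ = |x| := by simp
  have hsecond : ‖(T : ℂ) / (I * x) ^ 2‖ = T / |x| ^ 2 := by
    rw [norm_div, norm_pow, hnorm, Complex.norm_real, Real.norm_of_nonneg hT]
  have hthird : ‖(2 : ℂ) / (I * x) ^ 3‖ ≤ 2 / |x| ^ 2 := by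
    rw [norm_div, norm_pow, hnorm, Complex.norm_ofNat]
    gcongr
    norm_num
  rw [integral_expMode_parabolicMeasure hT hx0]
  calc ‖expMode x T * (T / (I * x) ^ 2 - 2 / (I * x) ^ 3) + (T / (I * x) ^ 2 + 2 / (I * x) ^ 3)‖
      ≤ (‖(T : ℂ) / (I * x) ^ 2‖ + ‖(2 : ℂ) / (I * x) ^ 3‖)
          + (‖(T : ℂ) / (I * x) ^ 2‖ + ‖(2 : ℂ) / (I * x) ^ 3‖) := by
        refine (norm_add_le _ _).trans (add_le_add ?_ (norm_add_le _ _))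
        rw [norm_mul, norm_expMode, one_mul]
        exact norm_sub_le _ _
    _ ≤ (T / |x| ^ 2 + 2 / |x| ^ 2) + (T / |x| ^ 2 + 2 / |x| ^ 2) := by rw [hsecond]; gcongr
    _ = (2 * T + 4) / x ^ 2 := by rw [sq_abs]; ring

end ParabolicMeasure

section Separated

variable {G : ℝ}

lemma one_div_sq_le_floor (hG : 0 < G) {d : ℝ} (hd : G ≤ |d|) :
    1 / d ^ 2 ≤ 4 / G ^ 2 * (1 / (⌊d / G⌋ : ℝ) ^ 2) := by
  set u := d / G with hu
  have hdu : d = G * u := by rw [hu]; field_simp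
  have hu1 : 1 ≤ |u| := by rwa [hu, abs_div, abs_of_pos hG, one_le_div hG]
  have hfloor := Int.floor_le u
  have hfloor' := Int.lt_floor_add_one u
  have hne : (⌊u⌋ : ℝ) ≠ 0 := by
    intro h
    rw [h] at hfloor hfloor'
    rw [abs_of_nonneg hfloor] at hu1
    linarith
  have hle : |(⌊u⌋ : ℝ)| ≤ |2 * u| := by
    rw [abs_mul, abs_two, abs_le]
    rcases abs_cases u with ⟨h, _⟩ | ⟨h, _⟩ <;> rw [h] at hu1 ⊢ <;> constructor <;> linarith
  have hsq : (⌊u⌋ : ℝ) ^ 2 ≤ 4 * u ^ 2 := (sq_le_sq.2 hle).trans_eq (by ring)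
  have hu2 : 0 < u ^ 2 := by nlinarith [sq_abs u]
  rw [hdu, mul_pow, div_mul_div_comm, div_le_div_iff₀ (by positivity) (by positivity)]
  nlinarith [sq_pos_of_pos hG]

lemma injOn_floor_div_of_separated (hG : 0 < G) {s : Set ℝ}
    (hs : s.Pairwise fun x y => G ≤ |x - y|) (x : ℝ) :
    Set.InjOn (fun y : ℝ => ⌊(x - y) / G⌋) s := by
  intro y hy z hz hyz
  by_contra hne
  have hlt := Int.abs_sub_lt_one_of_floor_eq_floor hyz
  rw [← sub_div, abs_div, abs_of_pos hG, div_lt_one hG, sub_sub_sub_cancel_left,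
    abs_sub_comm] at hlt
  exact hlt.not_ge (hs hy hz hne)

lemma sum_one_div_sub_sq_le_of_separated (hG : 0 < G) {s : Finset ℝ}
    (hs : (s : Set ℝ).Pairwise fun x y => G ≤ |x - y|) {x : ℝ} (hx : x ∈ s) :
    ∑ y ∈ s.erase x, 1 / (x - y) ^ 2 ≤ 4 / G ^ 2 * ∑' m : ℤ, 1 / (m : ℝ) ^ 2 := by
  have hinj : Set.InjOn (fun y : ℝ => ⌊(x - y) / G⌋) (s.erase x) :=
    injOn_floor_div_of_separated hG (hs.mono (by simp)) x
  calc ∑ y ∈ s.erase x, 1 / (x - y) ^ 2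
      ≤ ∑ y ∈ s.erase x, 4 / G ^ 2 * (1 / (⌊(x - y) / G⌋ : ℝ) ^ 2) :=
        Finset.sum_le_sum fun y hy => one_div_sq_le_floor hG
          (hs hx (Finset.mem_of_mem_erase hy) (Finset.ne_of_mem_erase hy).symm)
    _ = 4 / G ^ 2 * ∑ m ∈ (s.erase x).image (fun y : ℝ => ⌊(x - y) / G⌋), 1 / (m : ℝ) ^ 2 := by
        rw [← Finset.mul_sum, Finset.sum_image hinj]
    _ ≤ 4 / G ^ 2 * ∑' m : ℤ, 1 / (m : ℝ) ^ 2 := by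
        gcongr
        exact (Real.summable_one_div_int_pow.2 one_lt_two).sum_le_tsum _ fun _ _ => by positivity

end Separated

section AlmostOrthogonal

variable {𝕜 E ι : Type*} [RCLike 𝕜] [NormedAddCommGroup E] [InnerProductSpace 𝕜 E]
  [DecidableEq ι] {s : Finset ι} {f : ι → E} {S : ι → ℝ} {K : ι → ι → ℝ} {c : ℝ}

lemma norm_sq_sum_eq_sum_norm_sq_add (s : Finset ι) (f : ι → E) :
    ‖∑ i ∈ s, f i‖ ^ 2 = ∑ i ∈ s, ‖f i‖ ^ 2
      + ∑ i ∈ s, ∑ j ∈ s.erase i, RCLike.re (inner 𝕜 (f i) (f j)) := by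
  rw [← inner_self_eq_norm_sq (𝕜 := 𝕜), sum_inner, ← Finset.sum_add_distrib, map_sum]
  refine Finset.sum_congr rfl fun i hi => ?_
  rw [inner_sum, map_sum, ← Finset.add_sum_erase s _ hi, inner_self_eq_norm_sq]

lemma sum_sum_erase_mul_le (hS : ∀ i ∈ s, 0 ≤ S i) (hsymm : ∀ i j, K i j = K j i)
    (hrow : ∀ i ∈ s, ∑ j ∈ s.erase i, K i j ≤ c) :
    ∑ i ∈ s, ∑ j ∈ s.erase i, K i j * ((S i + S j) / 2) ≤ c * ∑ i ∈ s, S i := by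
  have hswap : ∑ i ∈ s, ∑ j ∈ s.erase i, K i j * S j = ∑ i ∈ s, ∑ j ∈ s.erase i, K i j * S i := by
    rw [Finset.sum_comm' (t' := s) (s' := fun j => s.erase j) fun i j => by
      simp only [Finset.mem_erase]; tauto]
    simp only [hsymm]
  calc ∑ i ∈ s, ∑ j ∈ s.erase i, K i j * ((S i + S j) / 2)
      = (∑ i ∈ s, ∑ j ∈ s.erase i, K i j * S i + ∑ i ∈ s, ∑ j ∈ s.erase i, K i j * S j) / 2 := by
        simp only [← Finset.sum_add_distrib, Finset.sum_div, mul_add, mul_div_assoc, add_div]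
    _ = ∑ i ∈ s, (∑ j ∈ s.erase i, K i j) * S i := by
        rw [hswap, add_self_div_two]
        simp only [Finset.sum_mul]
    _ ≤ ∑ i ∈ s, c * S i :=
        Finset.sum_le_sum fun i hi => mul_le_mul_of_nonneg_right (hrow i hi) (hS i hi)
    _ = c * ∑ i ∈ s, S i := (Finset.mul_sum _ _ _).symm

lemma half_mul_sum_le_norm_sq_sum (hS : ∀ i ∈ s, 0 ≤ S i)
    (hdiag : ∀ i ∈ s, c * S i ≤ ‖f i‖ ^ 2)
    (hoff : ∀ i ∈ s, ∀ j ∈ s, i ≠ j → ‖inner 𝕜 (f i) (f j)‖ ≤ K i j * ((S i + S j) / 2))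
    (hsymm : ∀ i j, K i j = K j i) (hrow : ∀ i ∈ s, ∑ j ∈ s.erase i, K i j ≤ c / 2) :
    c / 2 * ∑ i ∈ s, S i ≤ ‖∑ i ∈ s, f i‖ ^ 2 := by
  have hcross : -∑ i ∈ s, ∑ j ∈ s.erase i, K i j * ((S i + S j) / 2)
      ≤ ∑ i ∈ s, ∑ j ∈ s.erase i, RCLike.re (inner 𝕜 (f i) (f j)) := by
    simp only [← Finset.sum_neg_distrib]
    refine Finset.sum_le_sum fun i hi => Finset.sum_le_sum fun j hj => ?_
    have hij := hoff i hi j (Finset.mem_of_mem_erase hj) (Finset.ne_of_mem_erase hj).symm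
    exact (abs_le.1 ((RCLike.abs_re_le_norm _).trans hij)).1
  have hdiag_sum : c * ∑ i ∈ s, S i ≤ ∑ i ∈ s, ‖f i‖ ^ 2 := by
    rw [Finset.mul_sum]
    exact Finset.sum_le_sum hdiag
  have hoff_sum := sum_sum_erase_mul_le hS hsymm hrow
  rw [norm_sq_sum_eq_sum_norm_sq_add (𝕜 := 𝕜)]
  linarith

end AlmostOrthogonal

section Ingham

open Filter
open scoped Pointwise Topology

variable {T G c : ℝ} {O : Finset ℝ}

lemma sum_mul_sum_le_card_mul {ι : Type*} (s : Finset ι) (α β : ι → ℝ) :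
    (∑ i ∈ s, α i) * ∑ i ∈ s, β i ≤ s.card * ((∑ i ∈ s, α i ^ 2 + ∑ i ∈ s, β i ^ 2) / 2) := by
  have hα := sq_sum_le_card_mul_sum_sq (s := s) (f := α)
  have hβ := sq_sum_le_card_mul_sum_sq (s := s) (f := β)
  nlinarith [two_mul_le_add_sq (∑ i ∈ s, α i) (∑ i ∈ s, β i)]

lemma half_abs_sub_le_abs_add_sub_add {x y o p : ℝ} (ho : 4 * |o| ≤ |x - y|)
    (hp : 4 * |p| ≤ |x - y|) : |x - y| / 2 ≤ |(y + p) - (x + o)| := by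
  have htri : |x - y| ≤ |(y + p) - (x + o)| + (|o| + |p|) := by
    calc |x - y| = |((x + o) - (y + p)) + (p - o)| := by congr 1; ring
      _ ≤ |(x + o) - (y + p)| + |p - o| := abs_add_le _ _
      _ ≤ |(y + p) - (x + o)| + (|o| + |p|) := by
        rw [abs_sub_comm (x + o), add_comm |o|]
        gcongr
        exact abs_sub _ _
  linarith

lemma norm_inner_expLp_cluster_le (hT : 0 ≤ T) {x y o p : ℝ} (hxy : 2 ≤ |x - y|)
    (ho : 4 * |o| ≤ |x - y|) (hp : 4 * |p| ≤ |x - y|) :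
    ‖inner ℂ (expLp (parabolicMeasure T) (x + o)) (expLp (parabolicMeasure T) (y + p))‖
      ≤ 4 * (2 * T + 4) / (x - y) ^ 2 := by
  have hhalf := half_abs_sub_le_abs_add_sub_add ho hp
  rw [inner_expLp_expLp]
  calc ‖∫ t, expMode (y + p - (x + o)) t ∂parabolicMeasure T‖
      ≤ (2 * T + 4) / (y + p - (x + o)) ^ 2 :=
        norm_integral_expMode_parabolicMeasure_le hT (by linarith)
    _ ≤ (2 * T + 4) / (|x - y| / 2) ^ 2 := by
        rw [← sq_abs (y + p - (x + o))]
        have : 0 < |x - y| := by linarith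
        gcongr
    _ = 4 * (2 * T + 4) / (x - y) ^ 2 := by rw [div_pow, sq_abs, div_div_eq_mul_div]; ring

lemma norm_inner_cluster_le (hT : 0 ≤ T) {x y : ℝ} (hxy : 2 ≤ |x - y|)
    (hO : ∀ o ∈ O, 4 * |o| ≤ |x - y|) (a b : ℝ → ℂ) :
    ‖inner ℂ (∑ o ∈ O, a o • expLp (parabolicMeasure T) (x + o))
        (∑ o ∈ O, b o • expLp (parabolicMeasure T) (y + o))‖
      ≤ 4 * (2 * T + 4) * O.card / (x - y) ^ 2
          * ((∑ o ∈ O, ‖a o‖ ^ 2 + ∑ o ∈ O, ‖b o‖ ^ 2) / 2) := by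
  calc _ ≤ ∑ o ∈ O, ∑ p ∈ O, ‖a o‖ * (‖b p‖ * (4 * (2 * T + 4) / (x - y) ^ 2)) := by
        rw [sum_inner]
        refine norm_sum_le_of_le _ fun o ho => ?_
        rw [inner_sum]
        refine norm_sum_le_of_le _ fun p hp => ?_
        rw [inner_smul_left, inner_smul_right, norm_mul, norm_mul, RCLike.norm_conj]
        gcongr
        exact norm_inner_expLp_cluster_le hT hxy (hO o ho) (hO p hp)
    _ = 4 * (2 * T + 4) / (x - y) ^ 2 * ((∑ o ∈ O, ‖a o‖) * ∑ o ∈ O, ‖b o‖) := by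
        simp only [← mul_assoc, ← Finset.sum_mul, ← Finset.mul_sum]
        ring
    _ ≤ 4 * (2 * T + 4) / (x - y) ^ 2
          * (O.card * ((∑ o ∈ O, ‖a o‖ ^ 2 + ∑ o ∈ O, ‖b o‖ ^ 2) / 2)) := by
        refine mul_le_mul_of_nonneg_left ?_ (by positivity)
        exact sum_mul_sum_le_card_mul O _ _
    _ = _ := by ring

lemma exists_gap_ge (hc : 0 < c) (C : ℝ) (O : Finset ℝ) :
    ∃ G : ℝ, 2 ≤ G ∧ (∀ o ∈ O, 4 * |o| ≤ G) ∧ C / G ^ 2 ≤ c := by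
  have hlim : Tendsto (fun G : ℝ => C / G ^ 2) atTop (𝓝 0) :=
    tendsto_const_nhds.div_atTop (tendsto_pow_atTop two_ne_zero)
  exact ((eventually_ge_atTop 2).and (((eventually_all_finset O).2 fun o _ =>
    eventually_ge_atTop (4 * |o|)).and (hlim.eventually_le_const hc))).exists

lemma exists_ingham_parabolicMeasure (hT : 0 < T) (O : Finset ℝ) :
    ∃ G c : ℝ, 0 < G ∧ 0 < c ∧ (∀ o ∈ O, 4 * |o| ≤ G) ∧
      ∀ s : Finset ℝ, ((s : Set ℝ).Pairwise fun x y => G ≤ |x - y|) → ∀ a : ℝ → ℝ → ℂ,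
        c * ∑ x ∈ s, ∑ o ∈ O, ‖a x o‖ ^ 2
          ≤ ‖∑ x ∈ s, ∑ o ∈ O, a x o • expLp (parabolicMeasure T) (x + o)‖ ^ 2 := by
  obtain ⟨c, hc, hlower⟩ := exists_pos_mul_sum_norm_sq_le_of_linearIndependent
    (linearIndependent_expLp hT restrict_absolutelyContinuous_parabolicMeasure) O
  set C : ℝ := 4 * (2 * T + 4) * O.card
  obtain ⟨G, hG2, hGO, hGc⟩ :=
    exists_gap_ge (half_pos hc) (C * (4 * ∑' m : ℤ, 1 / (m : ℝ) ^ 2)) O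
  have hG : 0 < G := by linarith
  refine ⟨G, c / 2, hG, half_pos hc, hGO, fun s hs a => ?_⟩
  refine half_mul_sum_le_norm_sq_sum (𝕜 := ℂ) (K := fun x y => C / (x - y) ^ 2)
    (fun x _ => by positivity) (fun x _ => ?_) (fun x hx y hy hxy => ?_)
    (fun x y => by rw [← neg_sub, neg_sq]) (fun x hx => ?_)
  · rw [norm_sum_smul_expLp_add]
    exact hlower (a x)
  · have hgap := hs hx hy hxy
    exact norm_inner_cluster_le hT.le (hG2.trans hgap) (fun o ho => (hGO o ho).trans hgap) _ _
  · calc ∑ y ∈ s.erase x, C / (x - y) ^ 2 = C * ∑ y ∈ s.erase x, 1 / (x - y) ^ 2 := by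
          simp only [Finset.mul_sum, mul_one_div]
      _ ≤ C * (4 / G ^ 2 * ∑' m : ℤ, 1 / (m : ℝ) ^ 2) := by
          gcongr
          exact sum_one_div_sub_sq_le_of_separated hG hs hx
      _ = C * (4 * ∑' m : ℤ, 1 / (m : ℝ) ^ 2) / G ^ 2 := by ring
      _ ≤ c / 2 := hGc

lemma norm_sq_parabolicMeasure_le {ι : Type*} (s : Finset ι) (a : ι → ℂ) (θ : ι → ℝ) :
    ‖∑ i ∈ s, a i • expLp (parabolicMeasure T) (θ i)‖ ^ 2
      ≤ T ^ 2 * ‖∑ i ∈ s, a i • expLp (volume.restrict (Set.Ioo 0 T)) (θ i)‖ ^ 2 := by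
  rw [norm_sq_sum_smul_expLp, norm_sq_sum_smul_expLp]
  exact integral_parabolicMeasure_le (by fun_prop) fun t => by positivity

lemma sum_sum_add_eq_sum_add (hG : 0 < G) {s : Finset ℝ} (hO : ∀ o ∈ O, 4 * |o| ≤ G)
    (hs : (s : Set ℝ).Pairwise fun x y => G ≤ |x - y|) {M : Type*} [AddCommMonoid M] (g : ℝ → M) :
    ∑ x ∈ s, ∑ o ∈ O, g (x + o) = ∑ θ ∈ s + O, g θ := by
  have hinj : Set.InjOn (fun p : ℝ × ℝ => p.1 + p.2) (s ×ˢ O : Finset (ℝ × ℝ)) := by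
    rintro ⟨x, o⟩ hxo ⟨y, p⟩ hyp hsum
    obtain ⟨hx, ho⟩ := Finset.mem_product.1 hxo
    obtain ⟨hy, hp⟩ := Finset.mem_product.1 hyp
    have hxy : x = y := by
      by_contra hne
      have hgap : G ≤ |p - o| := by
        rw [show p - o = x - y by linarith]
        exact hs hx hy hne
      linarith [abs_sub p o, hO o ho, hO p hp]
    subst hxy
    exact Prod.ext rfl (add_left_cancel hsum)
  rw [← Finset.sum_product', ← Finset.image_add_product, Finset.sum_image hinj]

theorem exists_ingham (hT : 0 < T) (O : Finset ℝ) :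
    ∃ G c : ℝ, 0 < c ∧ ∀ B : Set ℝ, (B.Pairwise fun x y => G ≤ |x - y|) →
      ∀ S : Finset ℝ, ↑S ⊆ B + (O : Set ℝ) → ∀ α : ℝ → ℂ,
        c * ∑ θ ∈ S, ‖α θ‖ ^ 2
          ≤ ‖∑ θ ∈ S, α θ • expLp (volume.restrict (Set.Ioo 0 T)) θ‖ ^ 2 := by
  classical
  obtain ⟨G, c, hG, hc, hO, hingham⟩ := exists_ingham_parabolicMeasure hT O
  refine ⟨G, c / T ^ 2, by positivity, fun B hB S hS α => ?_⟩
  obtain ⟨s, O', hsB, hO'O, hSs⟩ := Finset.subset_add hS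
  have hSsO : S ⊆ s + O := hSs.trans (Finset.add_subset_add_left (Finset.coe_subset.1 hO'O))
  have hs : (s : Set ℝ).Pairwise fun x y => G ≤ |x - y| := hB.mono hsB
  have hrestrict {M : Type} [AddCommMonoid M] (g : ℝ → M) :
      ∑ x ∈ s, ∑ o ∈ O, (if x + o ∈ S then g (x + o) else 0) = ∑ θ ∈ S, g θ := by
    rw [sum_sum_add_eq_sum_add hG hO hs fun θ => if θ ∈ S then g θ else 0, Finset.sum_ite_mem,
      Finset.inter_eq_right.2 hSsO]
  have h := hingham s hs fun x o => if x + o ∈ S then α (x + o) else 0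
  simp only [apply_ite (fun z : ℂ => ‖z‖ ^ 2), norm_zero, ne_eq, OfNat.ofNat_ne_zero,
    not_false_eq_true, zero_pow, ite_smul, zero_smul] at h
  rw [hrestrict fun θ => ‖α θ‖ ^ 2,
    hrestrict fun θ => α θ • expLp (parabolicMeasure T) θ] at h
  rw [div_mul_eq_mul_div, div_le_iff₀' (by positivity)]
  exact h.trans (norm_sq_parabolicMeasure_le S α id)

end Ingham

/-! ### Moment problems on an interval -/

section RieszFischer

variable {ι 𝕜 H : Type*} [RCLike 𝕜] [NormedAddCommGroup H] [InnerProductSpace 𝕜 H]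
  {v : ι → H} {c : ℝ} {d : ι → 𝕜}

lemma linearIndependent_of_mul_sum_norm_sq_le (hc : 0 < c)
    (hv : ∀ (s : Finset ι) (a : ι → 𝕜), c * ∑ i ∈ s, ‖a i‖ ^ 2 ≤ ‖∑ i ∈ s, a i • v i‖ ^ 2) :
    LinearIndependent 𝕜 v := by
  refine linearIndependent_iff'.2 fun s a hzero i hi => ?_
  have hle := hv s a
  rw [hzero, norm_zero, zero_pow two_ne_zero] at hle
  have hsum : ∑ i ∈ s, ‖a i‖ ^ 2 ≤ 0 := nonpos_of_mul_nonpos_right hle hc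
  have hterm := (Finset.single_le_sum (fun i _ => sq_nonneg ‖a i‖) hi).trans hsum
  exact norm_eq_zero.1 (pow_eq_zero_iff two_ne_zero |>.1 (hterm.antisymm (sq_nonneg _)))

lemma norm_sum_smul_le_of_mul_sum_norm_sq_le (hc : 0 < c)
    (hv : ∀ (s : Finset ι) (a : ι → 𝕜), c * ∑ i ∈ s, ‖a i‖ ^ 2 ≤ ‖∑ i ∈ s, a i • v i‖ ^ 2)
    (hd : Summable fun i => ‖d i‖ ^ 2) (s : Finset ι) (a : ι → 𝕜) :
    ‖∑ i ∈ s, a i • d i‖ ≤ √((∑' i, ‖d i‖ ^ 2) / c) * ‖∑ i ∈ s, a i • v i‖ := by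
  have hquot : 0 ≤ (∑' i, ‖d i‖ ^ 2) / c := div_nonneg (tsum_nonneg fun i => sq_nonneg _) hc.le
  refine le_of_sq_le_sq ?_ (by positivity)
  rw [mul_pow, Real.sq_sqrt hquot, div_mul_eq_mul_div, le_div_iff₀ hc]
  calc ‖∑ i ∈ s, a i • d i‖ ^ 2 * c ≤ (∑ i ∈ s, ‖a i‖ * ‖d i‖) ^ 2 * c := by
        gcongr
        exact norm_sum_le_of_le s fun i _ => (norm_smul _ _).le
    _ ≤ (∑ i ∈ s, ‖a i‖ ^ 2) * (∑ i ∈ s, ‖d i‖ ^ 2) * c := by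
        gcongr
        exact Finset.sum_mul_sq_le_sq_mul_sq s _ _
    _ = (∑ i ∈ s, ‖d i‖ ^ 2) * (c * ∑ i ∈ s, ‖a i‖ ^ 2) := by ring
    _ ≤ (∑' i, ‖d i‖ ^ 2) * ‖∑ i ∈ s, a i • v i‖ ^ 2 := by
        gcongr
        · exact hd.sum_le_tsum s fun i _ => sq_nonneg _
        · exact hv s a

theorem exists_forall_inner_eq_of_mul_sum_norm_sq_le [CompleteSpace H] (hc : 0 < c)
    (hv : ∀ (s : Finset ι) (a : ι → 𝕜), c * ∑ i ∈ s, ‖a i‖ ^ 2 ≤ ‖∑ i ∈ s, a i • v i‖ ^ 2)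
    (hd : Summable fun i => ‖d i‖ ^ 2) : ∃ w : H, ∀ i, inner 𝕜 w (v i) = d i := by
  have hli := linearIndependent_of_mul_sum_norm_sq_le hc hv
  let f : StrongDual 𝕜 (Submodule.span 𝕜 (Set.range v)) :=
    (Finsupp.linearCombination 𝕜 d ∘ₗ hli.repr).mkContinuous
      √((∑' i, ‖d i‖ ^ 2) / c) fun x => by
        have h := norm_sum_smul_le_of_mul_sum_norm_sq_le hc hv hd (hli.repr x).support (hli.repr x)
        have hx : ∑ i ∈ (hli.repr x).support, hli.repr x i • v i = x :=
          hli.linearCombination_repr x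
        rwa [hx] at h
  obtain ⟨g, hg, -⟩ := exists_extension_norm_eq _ f
  refine ⟨(InnerProductSpace.toDual 𝕜 H).symm g, fun i => ?_⟩
  have hspan : v i ∈ Submodule.span 𝕜 (Set.range v) := Submodule.subset_span ⟨i, rfl⟩
  have hf : f ⟨v i, hspan⟩ = Finsupp.linearCombination 𝕜 d (hli.repr ⟨v i, hspan⟩) := rfl
  rw [InnerProductSpace.toDual_symm_apply, hg ⟨v i, hspan⟩, hf,
    hli.repr_eq_single i ⟨v i, hspan⟩ rfl, Finsupp.linearCombination_single, one_smul]

end RieszFischer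

section Moment

open Filter Pointwise Topology

/-- Square integrable functions on the line that vanish outside `(0, T)`. Working with functions
on the line keeps all moments and translations independent of `T`. -/
def l2Interval (T : ℝ) : Submodule ℂ (ℝ → ℂ) where
  carrier := {w | MemLp w 2 volume ∧ Function.support w ⊆ Set.Ioo 0 T}
  add_mem' := fun hv hw => ⟨hv.1.add hw.1,
    (Function.support_add _ _).trans (Set.union_subset hv.2 hw.2)⟩
  zero_mem' := ⟨.zero, by simp⟩
  smul_mem' := fun a w hw => ⟨hw.1.const_smul a,
    (Function.support_const_smul_subset a w).trans hw.2⟩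

/-- The moment of `w` against the test function `φ`, taken bilinearly (no conjugation). -/
noncomputable def moment (φ w : ℝ → ℂ) : ℂ := ∫ t, w t * φ t

variable {T : ℝ} {φ v w : ℝ → ℂ}

lemma l2Interval_mono : Monotone l2Interval := fun _ _ h _ hw =>
  ⟨hw.1, hw.2.trans (Set.Ioo_subset_Ioo_right h)⟩

lemma integrable_mul_of_mem_l2Interval (hw : w ∈ l2Interval T) (hφ : Continuous φ) :
    Integrable fun t => w t * φ t := by
  have hint : IntegrableOn (fun t => w t * φ t) (Set.Ioo 0 T) :=
    IntegrableOn.mul_continuousOn_of_subset ((hw.1.restrict _).integrable one_le_two)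
      hφ.continuousOn measurableSet_Ioo isCompact_Icc Set.Ioo_subset_Icc_self
  refine (integrableOn_iff_integrable_of_support_subset ?_).1 hint
  exact (Function.support_mul_subset_left w φ).trans hw.2

lemma moment_add (hφ : Continuous φ) (hv : v ∈ l2Interval T) (hw : w ∈ l2Interval T) :
    moment φ (v + w) = moment φ v + moment φ w := by
  simp only [moment, Pi.add_apply, add_mul]
  exact integral_add (integrable_mul_of_mem_l2Interval hv hφ)
    (integrable_mul_of_mem_l2Interval hw hφ)

lemma moment_sub (hφ : Continuous φ) (hv : v ∈ l2Interval T) (hw : w ∈ l2Interval T) :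
    moment φ (v - w) = moment φ v - moment φ w := by
  simp only [moment, Pi.sub_apply, sub_mul]
  exact integral_sub (integrable_mul_of_mem_l2Interval hv hφ)
    (integrable_mul_of_mem_l2Interval hw hφ)

lemma moment_smul (φ w : ℝ → ℂ) (a : ℂ) : moment φ (a • w) = a * moment φ w := by
  simp only [moment, Pi.smul_apply, smul_eq_mul, mul_assoc]
  exact integral_const_mul _ _

lemma moment_sum {ι : Type*} (hφ : Continuous φ) (s : Finset ι) {u : ι → ℝ → ℂ}
    (hu : ∀ i ∈ s, u i ∈ l2Interval T) : moment φ (∑ i ∈ s, u i) = ∑ i ∈ s, moment φ (u i) := by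
  simp only [moment, Finset.sum_apply, Finset.sum_mul]
  exact integral_finsetSum _ fun i hi => integrable_mul_of_mem_l2Interval (hu i hi) hφ

lemma setIntegral_mul_eq_moment (hw : w ∈ l2Interval T) (φ : ℝ → ℂ) :
    ∫ t in Set.Ioo 0 T, w t * φ t = moment φ w :=
  setIntegral_eq_integral_of_forall_compl_eq_zero fun t ht => by
    rw [Function.notMem_support.1 fun h => ht (hw.2 h), zero_mul]

lemma indicator_conj_mem_l2Interval (f : Lp ℂ 2 (volume.restrict (Set.Ioo 0 T))) :
    (Set.Ioo 0 T).indicator (fun t => (starRingEnd ℂ) (f t)) ∈ l2Interval T :=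
  ⟨(memLp_indicator_iff_restrict measurableSet_Ioo).2 (Lp.memLp f).star,
    Set.support_indicator_subset⟩

lemma moment_indicator_conj (f : Lp ℂ 2 (volume.restrict (Set.Ioo 0 T))) (θ : ℝ) :
    moment (expMode θ) ((Set.Ioo 0 T).indicator fun t => (starRingEnd ℂ) (f t)) =
      inner ℂ f (expLp (volume.restrict (Set.Ioo 0 T)) θ) := by
  rw [inner_expLp_right, ← setIntegral_mul_eq_moment (indicator_conj_mem_l2Interval f)]
  refine setIntegral_congr_fun measurableSet_Ioo fun t ht => ?_
  simp only [Set.indicator_of_mem ht]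

theorem exists_forall_moment_eq_of_separated (hT : 0 < T) (O : Finset ℝ) :
    ∃ G : ℝ, ∀ B : Set ℝ, (B.Pairwise fun x y => G ≤ |x - y|) →
      ∀ E : ℝ → ℂ, (Summable fun x => ‖E x‖ ^ 2) →
        ∃ w ∈ l2Interval T, ∀ x ∈ B + (O : Set ℝ), moment (expMode x) w = E x := by
  classical
  obtain ⟨G, c, hc, hingham⟩ := exists_ingham hT O
  refine ⟨G, fun B hB E hE => ?_⟩
  have hbelow (S : Finset ↥(B + (O : Set ℝ))) (a : ↥(B + (O : Set ℝ)) → ℂ) :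
      c * ∑ x ∈ S, ‖a x‖ ^ 2 ≤
        ‖∑ x ∈ S, a x • expLp (volume.restrict (Set.Ioo 0 T)) x‖ ^ 2 := by
    have h := hingham B hB (S.map (.subtype _)) (Finset.map_subtype_subset S)
      (Function.extend Subtype.val a 0)
    simpa only [Finset.sum_map, Function.Embedding.subtype_apply,
      Subtype.val_injective.extend_apply] using h
  obtain ⟨f, hf⟩ := exists_forall_inner_eq_of_mul_sum_norm_sq_le hc hbelow
    (d := fun x : ↥(B + (O : Set ℝ)) => E x) (hE.subtype _)
  exact ⟨_, indicator_conj_mem_l2Interval f, fun x hx =>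
    (moment_indicator_conj f x).trans (hf ⟨x, hx⟩)⟩

lemma exists_finset_forall_moment_eq {X : Set ℝ} (hX : HasSparseClusters X)
    (hT : 0 < T) (μ : ℝ) :
    ∃ F : Finset ℝ, μ ∉ F ∧ ∀ E : ℝ → ℂ, (Summable fun x => ‖E x‖ ^ 2) →
      ∃ w ∈ l2Interval T, ∀ x ∈ insert μ X \ ↑F, moment (expMode x) w = E x := by
  classical
  obtain ⟨O, hO⟩ := hX
  obtain ⟨G, hG⟩ := exists_forall_moment_eq_of_separated hT (insert 0 O)
  obtain ⟨B, hBsep, hBlarge, hfinite⟩ := hO (G + |μ|)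
  have hsep : (insert μ B).Pairwise fun x y => G ≤ |x - y| := by
    have hμ (x : ℝ) (hx : x ∈ B) : G ≤ |x - μ| := by
      linarith [hBlarge x hx, abs_sub_abs_le_abs_sub x μ]
    exact Set.pairwise_insert.2 ⟨hBsep.mono' fun x y h => by linarith [abs_nonneg μ],
      fun x hx _ => ⟨abs_sub_comm x μ ▸ hμ x hx, hμ x hx⟩⟩
  refine ⟨hfinite.toFinset.erase μ, Finset.notMem_erase _ _, fun E hE => ?_⟩
  obtain ⟨w, hw, hmoment⟩ := hG (insert μ B) hsep E hE
  refine ⟨w, hw, fun x hx => hmoment x ?_⟩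
  rw [Finset.coe_insert]
  rcases eq_or_ne x μ with rfl | hne
  · exact ⟨x, Set.mem_insert _ _, 0, Set.mem_insert _ _, add_zero x⟩
  · have hxF : x ∉ X \ (B + ↑O) := by simpa [hne] using hx.2
    have hxBO : x ∈ B + (O : Set ℝ) := by
      by_contra hxBO
      exact hxF ⟨hx.1.resolve_left hne, hxBO⟩
    exact Set.add_subset_add (Set.subset_insert _ _) (Set.subset_insert _ _) hxBO

/-- The difference of `w` with its translate by `s`, modulated so that every moment of `w` is kept
up to a factor and the one at frequency `θ` is annihilated. -/
noncomputable def modulatedDiff (θ s : ℝ) (w : ℝ → ℂ) : ℝ → ℂ :=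
  expMode (-θ) s • (fun t => w (t - s)) - w

variable {s : ℝ}

lemma translate_mem_l2Interval (hw : w ∈ l2Interval T) (hs : 0 ≤ s) :
    (fun t => w (t - s)) ∈ l2Interval (T + s) := by
  refine ⟨hw.1.comp_measurePreserving (measurePreserving_sub_right volume s), fun t ht => ?_⟩
  have hts : t - s ∈ Set.Ioo 0 T := hw.2 ht
  exact ⟨by linarith [hts.1], by linarith [hts.2]⟩

lemma modulatedDiff_mem_l2Interval (hw : w ∈ l2Interval T) (θ : ℝ) (hs : 0 ≤ s) :
    modulatedDiff θ s w ∈ l2Interval (T + s) :=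
  sub_mem (Submodule.smul_mem _ _ (translate_mem_l2Interval hw hs))
    (l2Interval_mono (le_add_of_nonneg_right hs) hw)

lemma moment_translate (φ w : ℝ → ℂ) (s : ℝ) :
    moment φ (fun t => w (t - s)) = moment (fun t => φ (t + s)) w := by
  have h := integral_sub_right_eq_self (μ := volume) (fun t => w t * φ (t + s)) s
  simpa only [moment, sub_add_cancel] using h

lemma moment_modulatedDiff (hφ : Continuous φ) (hw : w ∈ l2Interval T) (θ : ℝ) (hs : 0 ≤ s) :
    moment φ (modulatedDiff θ s w) =
      expMode (-θ) s * moment (fun t => φ (t + s)) w - moment φ w := by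
  rw [modulatedDiff, moment_sub hφ (Submodule.smul_mem _ _ (translate_mem_l2Interval hw hs))
    (l2Interval_mono (le_add_of_nonneg_right hs) hw), moment_smul, moment_translate]

lemma moment_expMode_modulatedDiff (hw : w ∈ l2Interval T) (θ x : ℝ) (hs : 0 ≤ s) :
    moment (expMode x) (modulatedDiff θ s w) =
      (expMode (x - θ) s - 1) * moment (expMode x) w := by
  have hfactor : moment (fun t => expMode x (t + s)) w = expMode x s * moment (expMode x) w := by
    simp only [moment, expMode_add_right, ← integral_const_mul]
    congr 1 with t
    ring
  rw [moment_modulatedDiff (continuous_expMode x) hw θ hs, hfactor, sub_eq_neg_add x θ,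
    expMode_add_left]
  ring

lemma moment_ofReal_modulatedDiff_zero (hw : w ∈ l2Interval T) (hs : 0 ≤ s) :
    moment ofReal (modulatedDiff 0 s w) = s * moment (expMode 0) w := by
  have hshift : moment (fun t => ((t + s : ℝ) : ℂ)) w =
      moment ofReal w + s * moment (expMode 0) w := by
    rw [moment, moment, moment, ← integral_const_mul, ← integral_add
      (integrable_mul_of_mem_l2Interval hw continuous_ofReal)
      ((integrable_mul_of_mem_l2Interval hw (continuous_expMode 0)).const_mul _)]
    congr 1 with t
    rw [expMode_zero_left]
    push_cast
    ring
  rw [moment_modulatedDiff continuous_ofReal hw 0 hs, hshift, neg_zero, expMode_zero_left]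
  ring

lemma exists_expMode_ne_one {θ ε : ℝ} (hθ : θ ≠ 0) (hε : 0 < ε) :
    ∃ s ∈ Set.Ioo 0 ε, expMode θ s ≠ 1 := by
  have hderiv : I * θ * expMode θ 0 ≠ 0 := by simp [hθ, expMode]
  have hne : ∀ᶠ s in 𝓝[>] (0 : ℝ), expMode θ s ≠ 1 :=
    ((hasDerivAt_expMode θ 0).eventually_ne hderiv).filter_mono
      (nhdsWithin_mono 0 fun s hs => ne_of_gt hs)
  have hIoo : ∀ᶠ s in 𝓝[>] (0 : ℝ), s ∈ Set.Ioo 0 ε := Ioo_mem_nhdsGT hε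
  exact (hIoo.and hne).exists

lemma exists_moment_eq_zero_of_finset {μ : ℝ} {F : Finset ℝ} (hμ : μ ∉ F) {T' : ℝ} (hT' : T < T')
    (hw : w ∈ l2Interval T) (hwμ : moment (expMode μ) w ≠ 0) :
    ∃ v ∈ l2Interval T', moment (expMode μ) v ≠ 0 ∧ (∀ x ∈ F, moment (expMode x) v = 0) ∧
      ∀ x, moment (expMode x) w = 0 → moment (expMode x) v = 0 := by
  classical
  induction F using Finset.induction_on generalizing T' with
  | empty => exact ⟨w, l2Interval_mono hT'.le hw, hwμ, by simp, fun _ h => h⟩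
  | insert θ F _ ih =>
    rw [Finset.mem_insert, not_or] at hμ
    obtain ⟨T₁, hTT₁, hT₁T'⟩ := exists_between hT'
    obtain ⟨v, hv, hvμ, hvF, hvw⟩ := ih hμ.2 hTT₁
    obtain ⟨s, hs, hs_ne⟩ := exists_expMode_ne_one (sub_ne_zero.2 hμ.1) (sub_pos.2 hT₁T')
    have hmoment (x : ℝ) := moment_expMode_modulatedDiff hv θ x hs.1.le
    have hvanish (x : ℝ) (hx : moment (expMode x) v = 0) :
        moment (expMode x) (modulatedDiff θ s v) = 0 := by rw [hmoment, hx, mul_zero]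
    refine ⟨modulatedDiff θ s v, l2Interval_mono (by linarith [hs.2])
      (modulatedDiff_mem_l2Interval hv θ hs.1.le), ?_, ?_, fun x hx => hvanish x (hvw x hx)⟩
    · rw [hmoment]
      exact mul_ne_zero (sub_ne_zero.2 hs_ne) hvμ
    · refine Finset.forall_mem_insert .. |>.2 ⟨?_, fun x hx => hvanish x (hvF x hx)⟩
      rw [hmoment, sub_self, expMode_zero_left, sub_self, zero_mul]

variable {X : Set ℝ}

lemma exists_biorthogonal (hX : HasSparseClusters X) (hT : 0 < T) (μ : ℝ) :
    ∃ v ∈ l2Interval T, moment (expMode μ) v = 1 ∧ ∀ x ∈ X, x ≠ μ → moment (expMode x) v = 0 := by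
  classical
  obtain ⟨F, hμF, hF⟩ := exists_finset_forall_moment_eq hX (half_pos hT) μ
  have hsummable : Summable fun x => ‖(Pi.single μ 1 : ℝ → ℂ) x‖ ^ 2 :=
    summable_of_ne_finset_zero (s := {μ}) fun x hx => by
      simp [Pi.single_eq_of_ne (Finset.notMem_singleton.1 hx)]
  obtain ⟨w, hw, hwE⟩ := hF _ hsummable
  have hwμ : moment (expMode μ) w = 1 := by
    rw [hwE μ ⟨Set.mem_insert _ _, hμF⟩, Pi.single_eq_same]
  obtain ⟨v, hv, hvμ, hvF, hvw⟩ :=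
    exists_moment_eq_zero_of_finset hμF (half_lt_self hT) hw (hwμ ▸ one_ne_zero)
  refine ⟨(moment (expMode μ) v)⁻¹ • v, Submodule.smul_mem _ _ hv, ?_, fun x hx hne => ?_⟩
  · rw [moment_smul, inv_mul_cancel₀ hvμ]
  · rw [moment_smul]
    by_cases hxF : x ∈ F
    · rw [hvF x hxF, mul_zero]
    · rw [hvw x, mul_zero]
      rw [hwE x ⟨Set.mem_insert_of_mem _ hx, hxF⟩, Pi.single_eq_of_ne hne]

lemma exists_moment_ofReal_eq_one (hX : HasSparseClusters X) (hT : 0 < T) :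
    ∃ r ∈ l2Interval T, moment ofReal r = 1 ∧ ∀ x ∈ X, moment (expMode x) r = 0 := by
  obtain ⟨v, hv, hv_zero, hvX⟩ := exists_biorthogonal hX (half_pos hT) 0
  have hmem := modulatedDiff_mem_l2Interval hv 0 (half_pos hT).le
  rw [add_halves] at hmem
  refine ⟨((T / 2 : ℝ) : ℂ)⁻¹ • modulatedDiff 0 (T / 2) v, Submodule.smul_mem _ _ hmem, ?_,
    fun x hx => ?_⟩
  · rw [moment_smul, moment_ofReal_modulatedDiff_zero hv (half_pos hT).le, hv_zero, mul_one,
      inv_mul_cancel₀ (ofReal_ne_zero.2 (half_pos hT).ne')]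
  · rw [moment_smul, moment_expMode_modulatedDiff hv 0 x (half_pos hT).le]
    rcases eq_or_ne x 0 with rfl | hne
    · rw [sub_self, expMode_zero_left, sub_self, zero_mul, mul_zero]
    · rw [hvX x hx hne, mul_zero, mul_zero]

lemma exists_forall_moment_eq (hX : HasSparseClusters X) (hT : 0 < T) {E : ℝ → ℂ}
    (hE : Summable fun x => ‖E x‖ ^ 2) :
    ∃ w ∈ l2Interval T, ∀ x ∈ X, moment (expMode x) w = E x := by
  classical
  obtain ⟨F, -, hF⟩ := exists_finset_forall_moment_eq hX hT 0
  obtain ⟨w, hw, hwE⟩ := hF E hE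
  choose v hv hvμ hvX using exists_biorthogonal hX hT
  let correction (μ : ℝ) : ℝ → ℂ := (E μ - moment (expMode μ) w) • v μ
  have hcorr (μ : ℝ) : correction μ ∈ l2Interval T := Submodule.smul_mem _ _ (hv μ)
  refine ⟨w + ∑ μ ∈ F, correction μ, add_mem hw (sum_mem fun μ _ => hcorr μ), fun x hx => ?_⟩
  have hcorr_moment (μ : ℝ) (hne : μ ≠ x) : moment (expMode x) (correction μ) = 0 := by
    rw [moment_smul, hvX μ x hx hne.symm, mul_zero]
  rw [moment_add (continuous_expMode x) hw (sum_mem fun μ _ => hcorr μ),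
    moment_sum (continuous_expMode x) F fun μ _ => hcorr μ]
  by_cases hxF : x ∈ F
  · rw [Finset.sum_eq_single_of_mem x hxF fun μ _ => hcorr_moment μ, moment_smul, hvμ]
    ring
  · rw [Finset.sum_eq_zero fun μ hμ => hcorr_moment μ fun h => hxF (h ▸ hμ), add_zero,
      hwE x ⟨Set.mem_insert_of_mem _ hx, hxF⟩]

theorem exists_forall_moment_eq_and_moment_ofReal_eq (hX : HasSparseClusters X) (hT : 0 < T)
    {E : ℝ → ℂ} (hE : Summable fun x => ‖E x‖ ^ 2) (D : ℂ) :
    ∃ w ∈ l2Interval T, (∀ x ∈ X, moment (expMode x) w = E x) ∧ moment ofReal w = D := by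
  obtain ⟨w, hw, hwE⟩ := exists_forall_moment_eq hX hT hE
  obtain ⟨r, hr, hr_one, hrX⟩ := exists_moment_ofReal_eq_one hX hT
  have hcorr := Submodule.smul_mem _ (D - moment ofReal w) hr
  refine ⟨w + (D - moment ofReal w) • r, add_mem hw hcorr, fun x hx => ?_, ?_⟩
  · rw [moment_add (continuous_expMode x) hw hcorr, moment_smul, hrX x hx, mul_zero, add_zero,
      hwE x hx]
  · rw [moment_add continuous_ofReal hw hcorr, moment_smul, hr_one]
    ring

end Moment

/-! ### Continuous selection of solutions -/

section Selection

variable {𝕜 ι F H V : Type*} [RCLike 𝕜] [NormedAddCommGroup F] [NormedSpace 𝕜 F]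
  [NormedAddCommGroup H] [InnerProductSpace 𝕜 H] [CompleteSpace H]
  [NormedAddCommGroup V] [NormedSpace 𝕜 V] [CompleteSpace V]

lemma isClosed_iInf_ker {E : Type*} [NormedAddCommGroup E] [NormedSpace 𝕜 E]
    (L : ι → E →L[𝕜] F) : IsClosed ((⨅ i, (L i).ker : Submodule 𝕜 E) : Set E) := by
  rw [Submodule.coe_iInf]
  exact isClosed_iInter fun i => (L i).isClosed_ker

lemma existsUnique_mem_orthogonal_iInf_ker (L : ι → H →L[𝕜] F) (x : H) :
    ∃! y, y ∈ (⨅ i, (L i).ker)ᗮ ∧ ∀ i, L i y = L i x := by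
  set N : Submodule 𝕜 H := ⨅ i, (L i).ker with hN
  have hmem (y : H) : y ∈ N ↔ ∀ i, L i y = 0 := by simp [hN]
  have : CompleteSpace N := (isClosed_iInf_ker L).completeSpace_coe
  refine ⟨x - N.starProjection x, ⟨N.sub_starProjection_mem_orthogonal x, fun i => ?_⟩, ?_⟩
  · rw [map_sub, (hmem _).1 (N.starProjection_apply_mem x) i, sub_zero]
  · rintro y ⟨hy, hLy⟩
    have hdiff_mem : y - (x - N.starProjection x) ∈ N := (hmem _).2 fun i => by
      rw [map_sub, map_sub, (hmem _).1 (N.starProjection_apply_mem x) i, hLy, sub_zero, sub_self]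
    have hdiff_orth := Nᗮ.sub_mem hy (N.sub_starProjection_mem_orthogonal x)
    exact sub_eq_zero.1 (inner_self_eq_zero.1
      (Submodule.inner_right_of_mem_orthogonal hdiff_mem hdiff_orth))

/-- Among the solutions, the one orthogonal to the common kernel depends linearly on the data, and
its graph is closed. -/
theorem exists_clm_forall_apply_eq (L : ι → H →L[𝕜] F) (c : ι → V →L[𝕜] F)
    (hsolvable : ∀ v, ∃ x, ∀ i, L i x = c i v) : ∃ M : V →L[𝕜] H, ∀ v i, L i (M v) = c i v := by
  set N : Submodule 𝕜 H := ⨅ i, (L i).ker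
  let equation (i : ι) : V × H →L[𝕜] F := L i ∘L .snd 𝕜 V H - c i ∘L .fst 𝕜 V H
  let K : Submodule 𝕜 (V × H) := (⨅ i, (equation i).ker) ⊓ Nᗮ.comap (LinearMap.snd 𝕜 V H)
  have hmem (p : V × H) : p ∈ K ↔ (∀ i, L i p.2 = c i p.1) ∧ p.2 ∈ Nᗮ := by
    simp [K, equation, sub_eq_zero]
  have hclosed : IsClosed (K : Set (V × H)) := (isClosed_iInf_ker equation).inter
    (N.isClosed_orthogonal.preimage continuous_snd)
  have : CompleteSpace K := hclosed.completeSpace_coe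
  have hinj : (ContinuousLinearMap.fst 𝕜 V H ∘L K.subtypeL).ker = ⊥ := by
    refine LinearMap.ker_eq_bot'.2 fun p hp => ?_
    obtain ⟨hL, horth⟩ := (hmem p).1 p.2
    have hp₁ : (p : V × H).1 = 0 := hp
    have hp₂ : (p : V × H).2 = 0 := (existsUnique_mem_orthogonal_iInf_ker L 0).unique
      ⟨horth, fun i => by rw [hL, hp₁, map_zero, map_zero]⟩ ⟨Nᗮ.zero_mem, fun _ => rfl⟩
    exact Subtype.ext (Prod.ext hp₁ hp₂)
  have hsurj : (ContinuousLinearMap.fst 𝕜 V H ∘L K.subtypeL).range = ⊤ := by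
    refine LinearMap.range_eq_top.2 fun v => ?_
    obtain ⟨x, hx⟩ := hsolvable v
    obtain ⟨y, ⟨hy, hLy⟩, -⟩ := existsUnique_mem_orthogonal_iInf_ker L x
    exact ⟨⟨(v, y), (hmem _).2 ⟨fun i => (hLy i).trans (hx i), hy⟩⟩, rfl⟩
  let e := ContinuousLinearEquiv.ofBijective _ hinj hsurj
  refine ⟨ContinuousLinearMap.snd 𝕜 V H ∘L K.subtypeL ∘L e.symm, fun v i => ?_⟩
  have hfst : (e.symm v : V × H).1 = v := e.apply_symm_apply v
  exact (((hmem _).1 (e.symm v).2).1 i).trans (by rw [hfst])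

end Selection

/-! ### Real-valued solutions -/

section RealMoment

section IntegralMul

variable {α : Type*} [MeasurableSpace α] {μ : Measure α} {φ : α → ℂ}

/-- The functional `f ↦ ∫ f φ` on real `L²(μ)`. -/
noncomputable def integralMulCLM (hφ : MemLp φ 2 μ) : Lp ℝ 2 μ →L[ℝ] ℂ :=
  (innerSL ℂ (hφ.star.toLp _)).restrictScalars ℝ ∘L ofRealCLM.compLpL 2 μ

lemma integralMulCLM_apply (hφ : MemLp φ 2 μ) (f : Lp ℝ 2 μ) :
    integralMulCLM hφ f = ∫ t, (f t : ℂ) * φ t ∂μ := by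
  refine (L2.inner_def (𝕜 := ℂ) _ _).trans (integral_congr_ae ?_)
  filter_upwards [hφ.star.coeFn_toLp, ofRealCLM.coeFn_compLpL f] with t hstar hf
  simp [hstar, hf]

end IntegralMul

variable {T : ℝ} {φ w : ℝ → ℂ}

lemma memLp_restrict_Ioo_of_continuous (hφ : Continuous φ) (T : ℝ) :
    MemLp φ 2 (volume.restrict (Set.Ioo 0 T)) := by
  obtain ⟨C, hC⟩ := (isCompact_Icc (a := 0) (b := T)).exists_bound_of_continuousOn hφ.continuousOn
  exact .of_bound hφ.aestronglyMeasurable C <| (ae_restrict_iff' measurableSet_Ioo).2 <|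
    .of_forall fun t ht => hC t (Set.Ioo_subset_Icc_self ht)

lemma integral_re_mul (hw : w ∈ l2Interval T) (hφ : Continuous φ) :
    ∫ t in Set.Ioo 0 T, ((w t).re : ℂ) * φ t =
      (moment φ w + (starRingEnd ℂ) (moment (fun t => (starRingEnd ℂ) (φ t)) w)) / 2 := by
  have hint := (integrable_mul_of_mem_l2Interval hw hφ).integrableOn (s := Set.Ioo 0 T)
  have hint_conj : IntegrableOn
      (fun t => (starRingEnd ℂ) (w t * (starRingEnd ℂ) (φ t))) (Set.Ioo 0 T) :=
    conjCLE.toContinuousLinearMap.integrable_comp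
      (integrable_mul_of_mem_l2Interval hw (continuous_conj.comp hφ)).integrableOn
  rw [← setIntegral_mul_eq_moment hw, ← setIntegral_mul_eq_moment hw, ← integral_conj,
    ← integral_add hint hint_conj, ← integral_div]
  congr 1 with t
  simp only [map_mul, conj_conj, re_eq_add_conj]
  ring

lemma exists_integralMulCLM_eq (hw : w ∈ l2Interval T) :
    ∃ f : Lp ℝ 2 (volume.restrict (Set.Ioo 0 T)), ∀ φ (hφ : Continuous φ),
      integralMulCLM (memLp_restrict_Ioo_of_continuous hφ T) f =
        (moment φ w + (starRingEnd ℂ) (moment (fun t => (starRingEnd ℂ) (φ t)) w)) / 2 := by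
  have hre : MemLp (fun t => (w t).re) 2 (volume.restrict (Set.Ioo 0 T)) := hw.1.re.restrict _
  refine ⟨hre.toLp _, fun φ hφ => ?_⟩
  rw [integralMulCLM_apply, ← integral_re_mul hw hφ]
  refine integral_congr_ae ?_
  filter_upwards [hre.coeFn_toLp] with t ht
  rw [ht]

lemma summable_norm_sq_extend {ι α : Type*} {u : ι → α} (hu : Function.Injective u)
    {d : ι → ℂ} (hd : Summable fun i => ‖d i‖ ^ 2) :
    Summable fun x => ‖Function.extend u d 0 x‖ ^ 2 := by
  refine (hu.summable_iff fun x hx => ?_).1 ?_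
  · rw [Function.extend_apply' _ _ _ hx, Pi.zero_apply, norm_zero, zero_pow two_ne_zero]
  · simpa only [Function.comp_def, hu.extend_apply] using hd

variable {ω : ℕ → ℝ}

/-- Take `2 dₙ` at `ωₙ` and `0` at `-ωₙ`, except at `ω₀`, which is its own opposite. -/
lemma exists_summable_add_conj_eq (hω : Function.Injective ω) (hω_zero : ω 0 = 0)
    (hω_nonneg : ∀ n, 0 ≤ ω n) {d : ℕ → ℂ} (hd : Summable fun n => ‖d n‖ ^ 2)
    (hd_zero : (d 0).im = 0) :
    ∃ E : ℝ → ℂ, (Summable fun x => ‖E x‖ ^ 2) ∧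
      ∀ n, (E (ω n) + (starRingEnd ℂ) (E (-ω n))) / 2 = d n := by
  classical
  set a : ℕ → ℂ := fun n => if n = 0 then d 0 else 2 * d n with ha
  have ha_le (n : ℕ) : ‖a n‖ ^ 2 ≤ 4 * ‖d n‖ ^ 2 := by
    rcases eq_or_ne n 0 with rfl | hn
    · simp only [ha, if_pos]
      linarith [sq_nonneg ‖d 0‖]
    · simp only [ha, if_neg hn, norm_mul, mul_pow, RCLike.norm_ofNat]
      norm_num
  refine ⟨Function.extend ω a 0, summable_norm_sq_extend hω
    (.of_nonneg_of_le (fun n => sq_nonneg _) ha_le (hd.mul_left 4)), fun n => ?_⟩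
  rcases eq_or_ne n 0 with rfl | hn
  · have hneg : -ω 0 = ω 0 := by rw [hω_zero, neg_zero]
    have ha_conj : (starRingEnd ℂ) (a 0) = a 0 := conj_eq_iff_im.2 hd_zero
    rw [hneg, hω.extend_apply, ha_conj, add_self_div_two]
    exact if_pos rfl
  · have hneg : ¬∃ m, ω m = -ω n := by
      rintro ⟨m, hm⟩
      exact hn (hω (by linarith [hω_nonneg m, hω_nonneg n]))
    rw [hω.extend_apply, Function.extend_apply' _ _ _ hneg]
    simp [ha, hn]

lemma exists_integralMulCLM_expMode_eq (hω : Function.Injective ω) (hω_zero : ω 0 = 0)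
    (hω_nonneg : ∀ n, 0 ≤ ω n) (hX : HasSparseClusters (Set.range ω)) (hT : 0 < T) {d : ℕ → ℂ}
    (hd : Summable fun n => ‖d n‖ ^ 2) (hd_zero : (d 0).im = 0) (D : ℝ) :
    ∃ f : Lp ℝ 2 (volume.restrict (Set.Ioo 0 T)),
      (∀ n, integralMulCLM
        (memLp_restrict_Ioo_of_continuous (continuous_expMode (ω n)) T) f = d n) ∧
      integralMulCLM (memLp_restrict_Ioo_of_continuous continuous_ofReal T) f = D := by
  obtain ⟨E, hE, hEd⟩ := exists_summable_add_conj_eq hω hω_zero hω_nonneg hd hd_zero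
  obtain ⟨w, hw, hwE, hwD⟩ := exists_forall_moment_eq_and_moment_ofReal_eq
    (hX.union_neg (Set.forall_mem_range.2 hω_nonneg)) hT hE D
  obtain ⟨f, hf⟩ := exists_integralMulCLM_eq hw
  refine ⟨f, fun n => ?_, ?_⟩
  · rw [hf _ (continuous_expMode _)]
    simp only [conj_expMode]
    rw [hwE (ω n) (.inl ⟨n, rfl⟩), hwE (-ω n) (.inr ⟨n, (neg_neg _).symm⟩), hEd]
  · rw [hf _ continuous_ofReal]
    simp only [conj_ofReal]
    rw [hwD, conj_ofReal, add_self_div_two]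

end RealMoment

lemma isClosed_l2r : IsClosed (l2r : Set (lp (fun _ : ℕ => ℂ) 2)) :=
  isClosed_eq (continuous_im.comp (lp.evalCLM ℝ (fun _ : ℕ => ℂ) 2 0).continuous) continuous_const

lemma summable_norm_sq_coe_l2r (d : l2r) :
    Summable fun n => ‖(d : lp (fun _ : ℕ => ℂ) 2) n‖ ^ 2 := by
  simpa using (lp.memℓp (d : lp (fun _ : ℕ => ℂ) 2)).summable (by norm_num)

lemma exists_clm_integralMulCLM_expMode_eq {ω : ℕ → ℝ} (hω : Function.Injective ω)
    (hω_zero : ω 0 = 0) (hω_nonneg : ∀ n, 0 ≤ ω n) (hX : HasSparseClusters (Set.range ω))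
    {T : ℝ} (hT : 0 < T) :
    ∃ M : (ℝ × l2r) →L[ℝ] Lp ℝ 2 (volume.restrict (Set.Ioo 0 T)), ∀ (D : ℝ) (d : l2r),
      (∀ n, integralMulCLM (memLp_restrict_Ioo_of_continuous (continuous_expMode (ω n)) T)
        (M (D, d)) = (d : lp (fun _ : ℕ => ℂ) 2) n) ∧
      integralMulCLM (memLp_restrict_Ioo_of_continuous continuous_ofReal T) (M (D, d)) = D := by
  have : CompleteSpace l2r := isClosed_l2r.completeSpace_coe
  let L : Option ℕ → Lp ℝ 2 (volume.restrict (Set.Ioo 0 T)) →L[ℝ] ℂ := fun o => o.elim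
    (integralMulCLM (memLp_restrict_Ioo_of_continuous continuous_ofReal T))
    fun n => integralMulCLM (memLp_restrict_Ioo_of_continuous (continuous_expMode (ω n)) T)
  let c : Option ℕ → (ℝ × l2r) →L[ℝ] ℂ := fun o => o.elim (ofRealCLM ∘L .fst ℝ ℝ l2r)
    fun n => lp.evalCLM ℝ (fun _ : ℕ => ℂ) 2 n ∘L l2r.subtypeL ∘L .snd ℝ ℝ l2r
  have hsolvable (v : ℝ × l2r) : ∃ f, ∀ o, L o f = c o v := by
    obtain ⟨f, hf, hfD⟩ := exists_integralMulCLM_expMode_eq hω hω_zero hω_nonneg hX hT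
      (summable_norm_sq_coe_l2r v.2) v.2.2 v.1
    exact ⟨f, Option.forall.2 ⟨hfD, hf⟩⟩
  obtain ⟨M, hM⟩ := exists_clm_forall_apply_eq L c hsolvable
  exact ⟨M, fun D d => ⟨fun n => hM (D, d) (some n), hM (D, d) none⟩⟩

theorem exists_clm_intervalIntegral_mul_exp_eq {ω : ℕ → ℝ} (hω : Function.Injective ω)
    (hω_zero : ω 0 = 0) (hω_nonneg : ∀ n, 0 ≤ ω n) (hX : HasSparseClusters (Set.range ω))
    {T : ℝ} (hT : 0 < T) :
    ∃ M : (ℝ × l2r) →L[ℝ] (Lp ℝ 2 (volume.restrict (Set.Ioo (0 : ℝ) T))),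
      ∀ (dtilde : ℝ) (d : l2r),
        (∀ n : ℕ,
          ∫ t in (0 : ℝ)..T,
            ((M (dtilde, d) t : ℝ) : ℂ) * Complex.exp (Complex.I * (ω n : ℂ) * (t : ℂ))
            = (d : lp (fun _ : ℕ => ℂ) 2) n) ∧
        (∫ t in (0 : ℝ)..T, t * (M (dtilde, d) t)) = dtilde := by
  obtain ⟨M, hM⟩ := exists_clm_integralMulCLM_expMode_eq hω hω_zero hω_nonneg hX hT
  refine ⟨M, fun D d => ?_⟩
  simp only [integralMulCLM_apply, ← integral_Ioc_eq_integral_Ioo,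
    ← intervalIntegral.integral_of_le hT.le] at hM
  refine ⟨(hM D d).1, ofReal_injective ?_⟩
  rw [← (hM D d).2, ← intervalIntegral.integral_ofReal]
  simp only [ofReal_mul, mul_comm]

section SqGaps

open Filter Pointwise

/-- The differences `j_n² - j_p²` with `p ∈ P` and `n > p`. -/
def sqGaps (j : ℕ → ℝ) (P : Set ℕ) : Set ℝ :=
  {x | ∃ p ∈ P, ∃ n, p + 1 ≤ n ∧ x = j n ^ 2 - j p ^ 2}

variable {j ω : ℕ → ℝ} {P : Set ℕ}

lemma pos_of_mem_sqGaps (hP : ∀ p ∈ P, 1 ≤ p) (hj_pos : ∀ k, 1 ≤ k → 0 < j k)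
    (hj_mono : ∀ k l, 1 ≤ k → k < l → j k < j l) {x : ℝ} (hx : x ∈ sqGaps j P) : 0 < x := by
  obtain ⟨p, hp, n, hpn, rfl⟩ := hx
  exact sub_pos.2 (pow_lt_pow_left₀ (hj_mono p n (hP p hp) hpn) (hj_pos p (hP p hp)).le two_ne_zero)

lemma hasSparseClusters_sqGaps (hP : P.Finite)
    (hj : Tendsto (fun k => j (k + 1 + 1) ^ 2 - j (k + 1) ^ 2) atTop atTop) :
    HasSparseClusters (sqGaps j P) := by
  classical
  refine (hasSparseClusters_range_sub (u := fun k => j (k + 1) ^ 2) hj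
    (hP.toFinset.image fun p => j p ^ 2)).mono ?_
  rintro x ⟨p, hp, n, hpn, rfl⟩
  refine Set.sub_mem_sub ⟨n - 1, ?_⟩ (by simpa using ⟨p, hp, rfl⟩)
  simp only [Nat.sub_add_cancel (Nat.le_of_add_left_le hpn)]

lemma tendsto_sq_sub_sq_of_besselJ_zeros (hj_pos : ∀ k, 1 ≤ k → 0 < j k)
    (hj_mono : ∀ k l, 1 ≤ k → k < l → j k < j l) (hj_zero : ∀ k, 1 ≤ k → besselJ 0 (j k) = 0)
    (hj_surj : ∀ x : ℝ, 0 < x → besselJ 0 x = 0 → ∃ k, 1 ≤ k ∧ j k = x) :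
    Tendsto (fun k => j (k + 1 + 1) ^ 2 - j (k + 1) ^ 2) atTop atTop := by
  refine tendsto_sq_sub_sq_besselJ_zeros (z := fun k => j (k + 1))
    (fun k l hkl => hj_mono _ _ k.succ_pos (Nat.succ_lt_succ hkl)) (Set.Subset.antisymm ?_ ?_)
  · rintro _ ⟨k, rfl⟩
    exact ⟨hj_pos _ k.succ_pos, hj_zero _ k.succ_pos⟩
  · rintro x ⟨hx_pos, hx_zero⟩
    obtain ⟨k, hk, rfl⟩ := hj_surj x hx_pos hx_zero
    exact ⟨k - 1, congrArg j (Nat.sub_add_cancel hk)⟩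

lemma strictMono_of_pos_of_lt_succ (hω_zero : ω 0 = 0) (hω_pos : ∀ k, 1 ≤ k → 0 < ω k)
    (hω_mono : ∀ k, 1 ≤ k → ω k < ω (k + 1)) : StrictMono ω :=
  strictMono_nat_of_lt_succ fun
    | 0 => hω_zero ▸ hω_pos 1 le_rfl
    | k + 1 => hω_mono (k + 1) k.succ_pos

theorem stmt12_general (hj_pos : ∀ k, 1 ≤ k → 0 < j k)
    (hj_mono : ∀ k l, 1 ≤ k → k < l → j k < j l) (hj_zero : ∀ k, 1 ≤ k → besselJ 0 (j k) = 0)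
    (hj_surj : ∀ x : ℝ, 0 < x → besselJ 0 x = 0 → ∃ k, 1 ≤ k ∧ j k = x)
    (hP : P.Finite) (hP_pos : ∀ p ∈ P, 1 ≤ p) (hω_zero : ω 0 = 0)
    (hω_mono : ∀ k, 1 ≤ k → ω k < ω (k + 1)) (hω_mem : ∀ k, 1 ≤ k → ω k ∈ sqGaps j P)
    {T : ℝ} (hT : 0 < T) :
    ∃ M : (ℝ × l2r) →L[ℝ] (Lp ℝ 2 (volume.restrict (Set.Ioo (0 : ℝ) T))),
      ∀ (dtilde : ℝ) (d : l2r),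
        (∀ n : ℕ,
          ∫ t in (0 : ℝ)..T,
            ((M (dtilde, d) t : ℝ) : ℂ) * Complex.exp (Complex.I * (ω n : ℂ) * (t : ℂ))
            = (d : lp (fun _ : ℕ => ℂ) 2) n) ∧
        (∫ t in (0 : ℝ)..T, t * (M (dtilde, d) t)) = dtilde := by
  have hω_pos (k : ℕ) (hk : 1 ≤ k) : 0 < ω k :=
    pos_of_mem_sqGaps hP_pos hj_pos hj_mono (hω_mem k hk)
  have hω : StrictMono ω := strictMono_of_pos_of_lt_succ hω_zero hω_pos hω_mono
  have hX : HasSparseClusters (sqGaps j P) := hasSparseClusters_sqGaps hP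
    (tendsto_sq_sub_sq_of_besselJ_zeros hj_pos hj_mono hj_zero hj_surj)
  have hrange : Set.range ω ⊆ insert 0 (sqGaps j P) := by
    rintro _ ⟨_ | k, rfl⟩
    exacts [.inl hω_zero, .inr (hω_mem (k + 1) k.succ_pos)]
  exact exists_clm_intervalIntegral_mul_exp_eq hω.injective hω_zero
    (fun n => hω_zero ▸ hω.monotone n.zero_le) ((hX.insert 0).mono hrange) hT

end SqGaps

/-- With `(j_{0,k})_{k≥1}` the increasing enumeration of the positive
zeros of `J_0`, `(ω_k)_{k≥1}` the increasing enumeration of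
`{j_{0,n}² - j_{0,p}² : p ∈ {1,2,3}, n ≥ p+1}` and `ω_0 := 0`, for every `T > 0` there
is a continuous `ℝ`-linear map `M : ℝ × ℓ²_r(ℕ,ℂ) → L²((0,T);ℝ)` such that
`w := M(d̃, d)` satisfies `∫_0^T w(t) e^{iω_n t} dt = d_n` for all `n` and
`∫_0^T t w(t) dt = d̃`. -/
theorem stmt12 (j : ℕ → ℝ)
    (hj_pos : ∀ k, 1 ≤ k → 0 < j k)
    (hj_mono : ∀ k l, 1 ≤ k → k < l → j k < j l)
    (hj_zero : ∀ k, 1 ≤ k → besselJ 0 (j k) = 0)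
    (hj_surj : ∀ x : ℝ, 0 < x → besselJ 0 x = 0 → ∃ k, 1 ≤ k ∧ j k = x)
    (ω : ℕ → ℝ) (hω_zero : ω 0 = 0)
    (hω_mono : ∀ k, 1 ≤ k → ω k < ω (k + 1))
    (hω_mem : ∀ k, 1 ≤ k → ω k ∈
      {x : ℝ | ∃ p ∈ ({1, 2, 3} : Set ℕ), ∃ n, p + 1 ≤ n ∧ x = (j n) ^ 2 - (j p) ^ 2})
    (hω_surj : ∀ x ∈
      {x : ℝ | ∃ p ∈ ({1, 2, 3} : Set ℕ), ∃ n, p + 1 ≤ n ∧ x = (j n) ^ 2 - (j p) ^ 2},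
      ∃ k, 1 ≤ k ∧ ω k = x)
    (T : ℝ) (hT : 0 < T) :
    ∃ M : (ℝ × l2r) →L[ℝ] (Lp ℝ 2 (volume.restrict (Set.Ioo (0 : ℝ) T))),
      ∀ (dtilde : ℝ) (d : l2r),
        (∀ n : ℕ,
          ∫ t in (0 : ℝ)..T,
            ((M (dtilde, d) t : ℝ) : ℂ) * Complex.exp (Complex.I * (ω n : ℂ) * (t : ℂ))
            = (d : lp (fun _ : ℕ => ℂ) 2) n) ∧
        (∫ t in (0 : ℝ)..T, t * (M (dtilde, d) t)) = dtilde := by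
  exact stmt12_general hj_pos hj_mono hj_zero hj_surj (Set.toFinite {1, 2, 3}) (by simp) hω_zero
    hω_mono hω_mem hT
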